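/- arXiv:1901.11134 — 8 statements merged into one kernel-verified Lean document; each statement's English description precedes it below -/
import Mathlib

section
/- Let n be a positive integer, let α > 0, let a < b, and let f : ℝ → ℝ be continuous on [a,b]. Then for every t ∈ (a,b), the n-th derivative at t of the function s ↦ (1/Γ(n+α)) ∫_a^s (s−τ)^{n+α−1} f(τ) dτ equals (1/Γ(α)) ∫_a^t (t−τ)^{α−1} f(τ) dτ. In other words, the Riemann–Liouville fractional derivative of order −α coincides with the Riemann–Liouville fractional integral of order α. -/
open Real intervalIntegral

/-!
The heart of the matter is the one-step identity
`d/ds ∫_a^s (s - τ)^β g(τ) dτ = β ∫_a^s (s - τ)^(β-1) g(τ) dτ` for `β > 0` (`hasDerivAt_rlInt`);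
together with `Γ(β + 1) = β Γ(β)`, induction on `n` gives the theorem.

For `β < 1` the kernel `(s - τ)^(β-1)` blows up at the moving endpoint, so the identity cannot be
obtained by differentiating the kernel under the integral sign. Instead, let `H` be the primitive of
`g` on `[a, ∞)` that is `0` on `(-∞, a]` (`clampedPrimitive`). Substitution and integration by parts
give `∫_a^s (s - τ)^β g(τ) dτ = ∫_0^c β x^(β-1) H(s - x) dx` for every `c ≥ s - a`
(`rlInt_succ_eq`). Here the singular kernel no longer depends on `s`, the limits are fixed, and `H`
is Lipschitz and differentiable away from `a`, so dominated differentiation applies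
(`hasDerivAt_rlInt_of_continuous`).
-/

/-- The primitive of `g` vanishing on `(-∞, a]`: it is `∫_a^x g` for `x ≥ a`. -/
noncomputable def clampedPrimitive (g : ℝ → ℝ) (a x : ℝ) : ℝ := ∫ τ in a..max x a, g τ

lemma clampedPrimitive_of_le (g : ℝ → ℝ) {a x : ℝ} (h : x ≤ a) :
    clampedPrimitive g a x = 0 := by
  simp [clampedPrimitive, max_eq_right h]

lemma lipschitzWith_clampedPrimitive {g : ℝ → ℝ} (hg : Continuous g) {M : NNReal}
    (hM : ∀ x, ‖g x‖ ≤ M) (a : ℝ) : LipschitzWith M (clampedPrimitive g a) := by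
  have h1 : LipschitzWith M (fun x => ∫ τ in a..x, g τ) := by
    refine lipschitzWith_of_nnnorm_deriv_le
      (fun x => (hg.integral_hasStrictDerivAt a x).hasDerivAt.differentiableAt) fun x => ?_
    rw [(hg.integral_hasStrictDerivAt a x).hasDerivAt.deriv]
    exact_mod_cast hM x
  have h2 : LipschitzWith 1 (fun x : ℝ => max x a) := LipschitzWith.id.max_const a
  have h3 := h1.comp h2
  rw [mul_one] at h3
  exact h3

lemma hasDerivAt_clampedPrimitive {g : ℝ → ℝ} (hg : Continuous g) {a x : ℝ} (hx : x ≠ a) :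
    HasDerivAt (clampedPrimitive g a) (if a < x then g x else 0) x := by
  rcases lt_or_gt_of_ne hx with h | h
  · rw [if_neg h.not_gt]
    refine (hasDerivAt_const x (0 : ℝ)).congr_of_eventuallyEq ?_
    filter_upwards [Iio_mem_nhds h] with y hy
    exact clampedPrimitive_of_le g (le_of_lt hy)
  · rw [if_pos h]
    refine (hg.integral_hasStrictDerivAt a x).hasDerivAt.congr_of_eventuallyEq ?_
    filter_upwards [Ioi_mem_nhds h] with y hy
    simp [clampedPrimitive, max_eq_left (le_of_lt (Set.mem_Ioi.1 hy))]

lemma integral_cutoff {h k : ℝ → ℝ} {d c : ℝ} (hd : 0 ≤ d) (hdc : d ≤ c)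
    (hlt : ∀ x, 0 < x → x < d → h x = k x) (hge : ∀ x, d ≤ x → h x = 0)
    (h_int : IntervalIntegrable h MeasureTheory.volume 0 c) :
    ∫ x in (0 : ℝ)..c, h x = ∫ x in (0 : ℝ)..d, k x := by
  have hm : d ∈ Set.uIcc 0 c := by rw [Set.uIcc_of_le (hd.trans hdc)]; exact ⟨hd, hdc⟩
  rw [← integral_add_adjacent_intervals
      (h_int.mono_set (Set.uIcc_subset_uIcc_left hm))
      (h_int.mono_set (Set.uIcc_subset_uIcc_right hm))]
  have h2 : ∫ x in d..c, h x = 0 := by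
    rw [integral_congr (g := fun _ => (0 : ℝ))]
    · simp
    · intro x hx
      rw [Set.uIcc_of_le hdc] at hx
      exact hge x hx.1
  rw [h2, add_zero]
  refine integral_congr_Ioo_of_le hd fun x hx => hlt x hx.1 hx.2

/-- Substituting `x = s - τ` and integrating by parts moves the dependence on `s` into the
Lipschitz function `clampedPrimitive g a`. As that function vanishes on `(-∞, a]`, the upper limit
`s - a` may be replaced by any larger `c`, which can then be chosen independent of `s`. -/
lemma rlInt_succ_eq {g : ℝ → ℝ} (hg : Continuous g) {a s c β : ℝ} (hβ : 0 < β)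
    (has : a < s) (hc : s - a ≤ c) :
    ∫ τ in a..s, (s - τ) ^ β * g τ =
      ∫ x in (0 : ℝ)..c, β * x ^ (β - 1) * clampedPrimitive g a (s - x) := by
  have hH : Continuous (clampedPrimitive g a) := by
    unfold clampedPrimitive
    exact (continuous_primitive (fun _ _ => hg.intervalIntegrable _ _) a).comp
      (continuous_id.max continuous_const)
  have hrp : ∀ u v : ℝ, IntervalIntegrable (fun x : ℝ => β * x ^ (β - 1))
      MeasureTheory.volume u v := fun u v =>
    (intervalIntegrable_rpow' (by linarith)).const_mul β
  have hsub : ∫ τ in a..s, (s - τ) ^ β * g τ = ∫ x in (0 : ℝ)..(s - a), x ^ β * g (s - x) := by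
    have := integral_comp_sub_left (a := a) (b := s) (fun x => x ^ β * g (s - x)) s
    simpa using this
  -- `g (s - x)` is the derivative of `-clampedPrimitive g a (s - x)` for `0 < x < s - a`.
  have hparts := integral_mul_deriv_eq_deriv_mul_of_hasDeriv_right
    (a := (0 : ℝ)) (b := s - a) (u := fun x : ℝ => x ^ β)
    (v := fun x => - clampedPrimitive g a (s - x)) (u' := fun x => β * x ^ (β - 1))
    (v' := fun x => g (s - x))
    (Real.continuous_rpow_const hβ.le).continuousOn (by fun_prop)
    (fun x hx => by
      rw [min_eq_left (by linarith)] at hx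
      exact (Real.hasDerivAt_rpow_const (Or.inl hx.1.ne')).hasDerivWithinAt)
    (fun x hx => by
      rw [max_eq_right (by linarith)] at hx
      have hlt : a < s - x := by linarith [hx.2]
      have h1 := hasDerivAt_clampedPrimitive hg hlt.ne'
      rw [if_pos hlt] at h1
      have h2 := (h1.comp x ((hasDerivAt_id x).const_sub s)).neg
      rw [mul_neg_one, neg_neg] at h2
      exact h2.hasDerivWithinAt)
    (hrp _ _) ((hg.comp (continuous_const.sub continuous_id)).intervalIntegrable _ _)
  rw [hsub, hparts]
  have hz : clampedPrimitive g a (s - (s - a)) = 0 := clampedPrimitive_of_le g (by linarith)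
  rw [hz, Real.zero_rpow hβ.ne']
  simp only [neg_zero, mul_zero, zero_mul, sub_zero, zero_sub, mul_neg, integral_neg, neg_neg]
  symm
  refine integral_cutoff (by linarith) hc (fun x _ _ => rfl) (fun x hx => ?_)
    ((hrp 0 c).mul_continuousOn (by fun_prop))
  rw [clampedPrimitive_of_le g (by linarith), mul_zero]

/-- Differentiation under the integral sign in `rlInt_succ_eq`. The domination is by
`M * β * x ^ (β - 1)`, which is integrable near `0` even when `β < 1`. -/
lemma hasDerivAt_rlInt_of_continuous {g : ℝ → ℝ} (hg : Continuous g) {M : NNReal}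
    (hM : ∀ x, ‖g x‖ ≤ M) {a t β : ℝ} (hβ : 0 < β) (hat : a < t) :
    HasDerivAt (fun s => ∫ τ in a..s, (s - τ) ^ β * g τ)
      (β * ∫ τ in a..t, (t - τ) ^ (β - 1) * g τ) t := by
  have hL := lipschitzWith_clampedPrimitive hg hM a
  have hH : Continuous (clampedPrimitive g a) := hL.continuous
  have hrp : ∀ u v : ℝ, IntervalIntegrable (fun x : ℝ => β * x ^ (β - 1))
      MeasureTheory.volume u v := fun u v =>
    (intervalIntegrable_rpow' (by linarith)).const_mul β
  have h_int : ∀ s u v : ℝ, IntervalIntegrable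
      (fun x => β * x ^ (β - 1) * clampedPrimitive g a (s - x)) MeasureTheory.volume u v :=
    fun s u v => (hrp u v).mul_continuousOn (by fun_prop)
  set F' : ℝ → ℝ := fun x => β * x ^ (β - 1) * (if a < t - x then g (t - x) else 0) with hF'
  have hF'm : Measurable F' := by
    have hgm := hg.measurable
    refine Measurable.mul (by fun_prop) (Measurable.ite ?_ (by fun_prop) measurable_const)
    exact measurableSet_lt measurable_const (by fun_prop)
  -- The limit `t + 1 - a` exceeds `s - a` for all `s` near `t`.
  have key := intervalIntegral.hasDerivAt_integral_of_dominated_loc_of_lip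
    (μ := MeasureTheory.volume) (a := (0 : ℝ)) (b := t + 1 - a) (x₀ := t) (s := Set.univ)
    (F := fun s x => β * x ^ (β - 1) * clampedPrimitive g a (s - x)) (F' := F')
    (bound := fun x => β * x ^ (β - 1) * M) Filter.univ_mem
    (Filter.Eventually.of_forall fun s => (h_int s _ _).def'.aestronglyMeasurable)
    (h_int t _ _) hF'm.aestronglyMeasurable
    (Filter.Eventually.of_forall fun x _ => by
      refine LipschitzWith.lipschitzOnWith (LipschitzWith.of_dist_le_mul fun y z => ?_)
      have h1 := hL.dist_le_mul (y - x) (z - x)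
      rw [dist_sub_right] at h1
      rw [Real.dist_eq, ← mul_sub, abs_mul, ← Real.dist_eq, Real.coe_nnabs, abs_mul _ (M : ℝ),
        abs_of_nonneg M.coe_nonneg, mul_assoc]
      exact mul_le_mul_of_nonneg_left h1 (abs_nonneg _))
    ((hrp _ _).mul_const _)
    (by
      have hne : ∀ᵐ x : ℝ, x ≠ t - a := by
        simp [MeasureTheory.ae_iff]
      filter_upwards [hne] with x hx _
      have hx' : t - x ≠ a := fun h => hx (by linarith)
      have h1 := (hasDerivAt_clampedPrimitive hg hx').comp t ((hasDerivAt_id t).sub_const x)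
      simpa [Function.comp_def, hF'] using h1.const_mul (β * x ^ (β - 1)))
  have hval : ∫ x in (0 : ℝ)..(t + 1 - a), F' x = β * ∫ τ in a..t, (t - τ) ^ (β - 1) * g τ := by
    rw [integral_cutoff (d := t - a) (k := fun x => β * (x ^ (β - 1) * g (t - x)))
      (by linarith) (by linarith)
      (fun x _ hx => by simp only [hF']; rw [if_pos (by linarith)]; ring)
      (fun x hx => by simp only [hF']; rw [if_neg (by linarith), mul_zero]) key.1,
      integral_const_mul]
    have := integral_comp_sub_left (a := a) (b := t) (fun x => x ^ (β - 1) * g (t - x)) t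
    simp only [sub_sub_cancel, sub_self] at this
    rw [this]
  rw [← hval]
  refine key.2.congr_of_eventuallyEq ?_
  filter_upwards [Ioo_mem_nhds hat (lt_add_one t)] with s hs
  exact rlInt_succ_eq hg hβ hs.1 (by linarith [hs.2])

/-- The case of `f` continuous only on `[a, b]`, obtained by extending `f` to a bounded continuous
function on `ℝ`. -/
lemma hasDerivAt_rlInt {f : ℝ → ℝ} {a b t β : ℝ} (hf : ContinuousOn f (Set.Icc a b))
    (hβ : 0 < β) (ht : t ∈ Set.Ioo a b) :
    HasDerivAt (fun s => ∫ τ in a..s, (s - τ) ^ β * f τ)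
      (β * ∫ τ in a..t, (t - τ) ^ (β - 1) * f τ) t := by
  have hab : a ≤ b := (ht.1.trans ht.2).le
  have hg : Continuous (Set.IccExtend hab ((Set.Icc a b).domRestrict f)) :=
    (continuousOn_iff_continuous_domRestrict.1 hf).Icc_extend'
  obtain ⟨M, hM⟩ := isCompact_Icc.exists_bound_of_continuousOn hf
  have hM' : ∀ x, ‖Set.IccExtend hab ((Set.Icc a b).domRestrict f) x‖ ≤ (M.toNNReal : ℝ) :=
    fun x => (hM _ (Set.projIcc a b hab x).2).trans (Real.le_coe_toNNReal M)
  have hcongr : ∀ (γ : ℝ), ∀ s ∈ Set.Ioo a b, ∫ τ in a..s, (s - τ) ^ γ * f τ =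
      ∫ τ in a..s, (s - τ) ^ γ * Set.IccExtend hab ((Set.Icc a b).domRestrict f) τ := by
    intro γ s hs
    refine integral_congr fun τ hτ => ?_
    rw [Set.uIcc_of_le hs.1.le] at hτ
    rw [Set.IccExtend_of_mem hab _ (⟨hτ.1, hτ.2.trans hs.2.le⟩ : τ ∈ Set.Icc a b),
      Set.domRestrict_apply]
  rw [hcongr _ t ht]
  refine (hasDerivAt_rlInt_of_continuous hg hM' hβ ht.1).congr_of_eventuallyEq ?_
  filter_upwards [Ioo_mem_nhds ht.1 ht.2] with s hs
  exact hcongr β s hs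

/-- **The Riemann–Liouville fractional derivative of negative order is the fractional
integral.** For `α > 0` and `f` continuous on `[a, b]`, the `n`-th derivative of
`s ↦ (1/Γ(n+α)) ∫_a^s (s-τ)^(n+α-1) f(τ) dτ` at any `t ∈ (a, b)` equals the
Riemann–Liouville fractional integral `(1/Γ(α)) ∫_a^t (t-τ)^(α-1) f(τ) dτ`. -/
theorem rlDeriv_neg_order_eq_rlInt
    (n : ℕ) (hn : 0 < n) (α : ℝ) (hα : 0 < α)
    (a b : ℝ) (hab : a < b) (f : ℝ → ℝ) (hf : ContinuousOn f (Set.Icc a b)) :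
    ∀ t ∈ Set.Ioo a b,
      iteratedDeriv n
          (fun s => (1 / Real.Gamma ((n : ℝ) + α)) *
            ∫ τ in a..s, (s - τ) ^ ((n : ℝ) + α - 1) * f τ) t =
        (1 / Real.Gamma α) * ∫ τ in a..t, (t - τ) ^ (α - 1) * f τ := by
  -- The identity holds trivially for `n = 0`, which serves as the base case.
  clear hn
  induction n with
  | zero => intro t _; simp
  | succ k ih =>
    intro t ht
    rw [iteratedDeriv_succ', ← ih t ht]
    refine Filter.EventuallyEq.iteratedDeriv_eq k ?_
    filter_upwards [Ioo_mem_nhds ht.1 ht.2] with s hs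
    have hpos : 0 < (k : ℝ) + α := by positivity
    have e1 : ((k + 1 : ℕ) : ℝ) + α = (k : ℝ) + α + 1 := by push_cast; ring
    simp only [e1, add_sub_cancel_right]
    rw [((hasDerivAt_rlInt hf hpos hs).const_mul _).deriv, Real.Gamma_add_one hpos.ne']
    have hΓ := (Real.Gamma_pos_of_pos hpos).ne'
    field_simp
end

section
/- Let α > 0, let N be a natural number, let a < t, and let g : ℝ → ℝ be continuous on [a,t]. Then (1/(Γ(α)·Γ(N+1))) ∫_a^t (t−x)^{α−1} (∫_a^x (x−τ)^N g(τ) dτ) dx = (1/Γ(N+α+1)) ∫_a^t (t−τ)^{N+α} g(τ) dτ. -/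
open Real intervalIntegral

/-!
The left-hand side is an iterated integral over the triangle `a < τ ≤ x ≤ t`. Extending the inner
integrand by zero above the diagonal (`remKernel`) turns it into an integral over the square
`(a, t]²`, where the integrand is a bounded kernel times the product of the integrable functions
`(t - x) ^ (α - 1)` and `g τ` (`integrable_remKernel_mul`), so Fubini applies. After the swap the
inner integral is the Beta integral
`∫_τ^t (t - x)^(α - 1) (x - τ)^N dx = (t - τ)^(N + α) Γ(α) Γ(N + 1) / Γ(N + α + 1)`
(`integral_rpow_mul_pow`).
-/

open MeasureTheory Set

/-- The Beta integral on `[τ, t]`. -/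
lemma integral_rpow_mul_pow {α : ℝ} (hα : 0 < α) (N : ℕ) {τ t : ℝ} (h : τ < t) :
    ∫ x in τ..t, (t - x) ^ (α - 1) * (x - τ) ^ N =
      (t - τ) ^ ((N : ℝ) + α) *
        (Real.Gamma α * Real.Gamma ((N : ℝ) + 1) / Real.Gamma ((N : ℝ) + α + 1)) := by
  have hb := Complex.betaIntegral_scaled ((N : ℂ) + 1) (α : ℂ) (sub_pos.2 h)
  rw [Complex.betaIntegral_eq_Gamma_mul_div _ _
    (by simp only [Complex.add_re, Complex.natCast_re, Complex.one_re]; positivity)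
    (by simpa using hα)] at hb
  have hshift : ∫ x in τ..t, (t - x) ^ (α - 1) * (x - τ) ^ N =
      ∫ y in (0 : ℝ)..(t - τ), (t - τ - y) ^ (α - 1) * y ^ N := by
    have := intervalIntegral.integral_comp_sub_right (a := τ) (b := t)
      (fun y : ℝ => (t - τ - y) ^ (α - 1) * y ^ N) τ
    simp only [sub_self, sub_sub_sub_cancel_right] at this
    rw [← this]
  rw [hshift]
  apply Complex.ofReal_injective
  rw [← intervalIntegral.integral_ofReal]
  have hL : ∫ y in (0 : ℝ)..(t - τ), (((t - τ - y) ^ (α - 1) * y ^ N : ℝ) : ℂ) =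
      ∫ y in (0 : ℝ)..(t - τ), (y : ℂ) ^ ((N : ℂ) + 1 - 1) *
        (((t - τ : ℝ) : ℂ) - y) ^ ((α : ℂ) - 1) := by
    apply intervalIntegral.integral_congr
    intro y hy
    rw [uIcc_of_le (sub_pos.2 h).le] at hy
    simp only [add_sub_cancel_right, Complex.cpow_natCast]
    rw [Complex.ofReal_mul, Complex.ofReal_cpow (by linarith [hy.2]), mul_comm]
    push_cast
    rfl
  rw [hL, hb]
  have e1 : (N : ℂ) + 1 + α - 1 = (((N : ℝ) + α : ℝ) : ℂ) := by push_cast; ring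
  have e2 : (N : ℂ) + 1 + α = (((N : ℝ) + α + 1 : ℝ) : ℂ) := by push_cast; ring
  have e3 : (N : ℂ) + 1 = (((N : ℝ) + 1 : ℝ) : ℂ) := by push_cast; ring
  rw [e1, e2, e3, Complex.Gamma_ofReal, Complex.Gamma_ofReal, Complex.Gamma_ofReal,
    ← Complex.ofReal_cpow (sub_pos.2 h).le]
  push_cast
  ring

/-- The kernel `(x - τ) ^ N`, extended by zero to `τ > x`. An explicit case split is used because
a truncated power such as `(max (x - τ) 0) ^ N` would equal `1` off the triangle for `N = 0`. -/
noncomputable def remKernel (N : ℕ) (x τ : ℝ) : ℝ := if τ ≤ x then (x - τ) ^ N else 0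

lemma measurable_remKernel (N : ℕ) : Measurable (fun p : ℝ × ℝ => remKernel N p.1 p.2) := by
  unfold remKernel
  exact Measurable.ite (measurableSet_le measurable_snd measurable_fst) (by fun_prop)
    measurable_const

lemma integrable_remKernel_mul {α : ℝ} (hα : 0 < α) (N : ℕ) {a t : ℝ} (hat : a < t)
    {g : ℝ → ℝ} (hg : ContinuousOn g (Icc a t)) :
    Integrable (Function.uncurry fun x τ => (t - x) ^ (α - 1) * (remKernel N x τ * g τ))
      ((volume.restrict (Ioc a t)).prod (volume.restrict (Ioc a t))) := by
  have hf : Integrable (fun x : ℝ => (t - x) ^ (α - 1)) (volume.restrict (Ioc a t)) := by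
    have h0 : IntervalIntegrable (fun x : ℝ => x ^ (α - 1)) volume (t - a) (t - t) :=
      intervalIntegral.intervalIntegrable_rpow' (by linarith)
    have h1 := h0.comp_sub_left t
    simp only [sub_sub_cancel] at h1
    exact (intervalIntegrable_iff_integrableOn_Ioc_of_le hat.le).1 h1
  have hgi : Integrable g (volume.restrict (Ioc a t)) :=
    (hg.integrableOn_Icc).mono_set Ioc_subset_Icc_self
  have hprod := hf.mul_prod hgi
  have hK : ∀ᵐ p ∂((volume.restrict (Ioc a t)).prod (volume.restrict (Ioc a t))),
      ‖remKernel N p.1 p.2‖ ≤ (t - a) ^ N := by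
    rw [Measure.prod_restrict]
    filter_upwards [ae_restrict_mem (measurableSet_Ioc.prod measurableSet_Ioc)] with p hp
    obtain ⟨⟨h1, h2⟩, h3, h4⟩ := hp
    unfold remKernel
    split_ifs with hle
    · rw [Real.norm_of_nonneg (pow_nonneg (sub_nonneg.2 hle) _)]
      exact pow_le_pow_left₀ (sub_nonneg.2 hle) (by linarith) _
    · simpa using pow_nonneg (sub_pos.2 hat).le N
  refine (hprod.bdd_mul (measurable_remKernel N).aestronglyMeasurable hK).congr ?_
  filter_upwards with p
  simp only [Function.uncurry]
  ring

lemma integral_remKernel_left (N : ℕ) {a t x : ℝ} (hx : x ∈ Ioc a t) (g : ℝ → ℝ) :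
    ∫ τ in Ioc a t, remKernel N x τ * g τ = ∫ τ in a..x, (x - τ) ^ N * g τ := by
  rw [intervalIntegral.integral_of_le hx.1.le]
  have hi : (fun τ => remKernel N x τ * g τ) =
      (Iic x).indicator (fun τ => (x - τ) ^ N * g τ) := by
    ext τ
    by_cases h : τ ≤ x <;> simp [remKernel, h]
  rw [hi, setIntegral_indicator measurableSet_Iic, Ioc_inter_Iic, min_eq_right hx.2]

lemma integral_remKernel_right (N : ℕ) {a t τ : ℝ} (hτ : τ ∈ Ioc a t) (f : ℝ → ℝ) :
    ∫ x in Ioc a t, f x * remKernel N x τ = ∫ x in τ..t, f x * (x - τ) ^ N := by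
  rw [intervalIntegral.integral_of_le hτ.2, ← integral_Icc_eq_integral_Ioc (x := τ)]
  have hi : (fun x => f x * remKernel N x τ) =
      (Ici τ).indicator (fun x => f x * (x - τ) ^ N) := by
    ext x
    by_cases h : τ ≤ x <;> simp [remKernel, h]
  have hs : Ioc a t ∩ Ici τ = Icc τ t := by
    ext x
    simp only [mem_inter_iff, mem_Ioc, mem_Ici, mem_Icc]
    exact ⟨fun h => ⟨h.2, h.1.2⟩, fun h => ⟨⟨hτ.1.trans_le h.1, h.2⟩, h.1⟩⟩
  rw [hi, setIntegral_indicator measurableSet_Ici, hs]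

/-- **Fubini-type identity for the fractional integral of a Taylor remainder.** For
`α > 0`, `N ∈ ℕ`, `a < t` and `g` continuous on `[a, t]`,
`(1/(Γ(α)Γ(N+1))) ∫_a^t (t-x)^(α-1) (∫_a^x (x-τ)^N g(τ) dτ) dx
  = (1/Γ(N+α+1)) ∫_a^t (t-τ)^(N+α) g(τ) dτ`. -/
theorem rlInt_iterated_remainder
    (α : ℝ) (hα : 0 < α) (N : ℕ) (a t : ℝ) (hat : a < t)
    (g : ℝ → ℝ) (hg : ContinuousOn g (Set.Icc a t)) :
    (1 / (Real.Gamma α * Real.Gamma ((N : ℝ) + 1))) *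
        ∫ x in a..t, (t - x) ^ (α - 1) * ∫ τ in a..x, (x - τ) ^ N * g τ =
      (1 / Real.Gamma ((N : ℝ) + α + 1)) *
        ∫ τ in a..t, (t - τ) ^ ((N : ℝ) + α) * g τ := by
  have hΓα : Real.Gamma α ≠ 0 := (Real.Gamma_pos_of_pos hα).ne'
  have hΓN : Real.Gamma ((N : ℝ) + 1) ≠ 0 := (Real.Gamma_pos_of_pos (by positivity)).ne'
  have key : ∫ x in a..t, (t - x) ^ (α - 1) * ∫ τ in a..x, (x - τ) ^ N * g τ =
      (Real.Gamma α * Real.Gamma ((N : ℝ) + 1) / Real.Gamma ((N : ℝ) + α + 1)) *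
        ∫ τ in a..t, (t - τ) ^ ((N : ℝ) + α) * g τ := by
    rw [intervalIntegral.integral_of_le hat.le, intervalIntegral.integral_of_le hat.le]
    calc ∫ x in Ioc a t, (t - x) ^ (α - 1) * ∫ τ in a..x, (x - τ) ^ N * g τ
        = ∫ x in Ioc a t, ∫ τ in Ioc a t, (t - x) ^ (α - 1) * (remKernel N x τ * g τ) := by
          refine setIntegral_congr_fun measurableSet_Ioc fun x hx => ?_
          simp only [MeasureTheory.integral_const_mul, integral_remKernel_left N hx]
      _ = ∫ τ in Ioc a t, ∫ x in Ioc a t, (t - x) ^ (α - 1) * (remKernel N x τ * g τ) :=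
          integral_integral_swap (integrable_remKernel_mul hα N hat hg)
      _ = ∫ τ in Ioc a t,
            (Real.Gamma α * Real.Gamma ((N : ℝ) + 1) / Real.Gamma ((N : ℝ) + α + 1)) *
              ((t - τ) ^ ((N : ℝ) + α) * g τ) := by
          -- The Beta integral needs `τ < t`, so the null set `{t}` is discarded first.
          rw [integral_Ioc_eq_integral_Ioo, integral_Ioc_eq_integral_Ioo]
          refine setIntegral_congr_fun measurableSet_Ioo fun τ hτ => ?_
          simp only [← mul_assoc]
          rw [MeasureTheory.integral_mul_const,
            integral_remKernel_right N (Ioo_subset_Ioc_self hτ),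
            integral_rpow_mul_pow hα N hτ.2]
          ring
      _ = _ := MeasureTheory.integral_const_mul _ _
  rw [key]
  field_simp
end

section
/- Let n be a positive integer, let n−1 < α < n, let a < b, and let f : ℝ → ℝ be infinitely differentiable with its Taylor series at a converging to f on [a,b], i.e. f(t) = Σ_{k=0}^∞ f^{(k)}(a)/k! · (t−a)^k for every t ∈ [a,b]. Then for every t ∈ (a,b], (D_RL^α (I^α f))(t) = f(t). If moreover 0 < α < 1, then also (I^α (D_RL^α f))(t) = f(t) for every t ∈ (a,b]. -/
/-!
Everything rests on the semigroup law `I^β I^α g = I^(α+β) g` for continuous `g` and positive orders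
(`rlInt_rlInt`), which is Fubini's theorem on a triangle together with Euler's Beta integral.

For the first identity, the semigroup law gives `I^(n-α) I^α f = I^n f` to the right of `a`, and `I^n`
is the `n`-fold iterated integral, so that differentiating `n` times returns `f`
(`iteratedDeriv_rlInt_nat`).

For the second identity, writing `f = f a + I^1 f'` and using the semigroup law yields
`I^(1-α) f = f(a) (t-a)^(1-α) / Γ(2-α) + I^1 I^(1-α) f'`. Its derivative is
`f(a) (t-a)^(-α) / Γ(1-α) + I^(1-α) f'` (`deriv_rlInt`), and `I^α` maps this to
`f(a) + I^1 f' = f` (`rlInt_deriv_rlInt`).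
-/

open Real intervalIntegral

/-- The Riemann–Liouville fractional integral of order `γ` of `g` with initial
instant `a`, evaluated at `t`. -/
noncomputable def rlInt (a γ : ℝ) (g : ℝ → ℝ) (t : ℝ) : ℝ :=
  (1 / Real.Gamma γ) * ∫ τ in a..t, (t - τ) ^ (γ - 1) * g τ

open MeasureTheory Set

/-! ### The Beta integral and the kernel -/

/-- Euler's Beta integral, transported from `(0, 1)` to `(τ, t)`. -/
theorem integral_beta_kernel {α β τ t : ℝ} (hα : 0 < α) (hβ : 0 < β) (h : τ < t) :
    ∫ s in τ..t, (t - s) ^ (β - 1) * (s - τ) ^ (α - 1) =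
      (t - τ) ^ (α + β - 1) * (Real.Gamma α * Real.Gamma β / Real.Gamma (α + β)) := by
  have hL : 0 < t - τ := sub_pos.2 h
  have e1 : ∫ s in τ..t, (t - s) ^ (β - 1) * (s - τ) ^ (α - 1) =
      ∫ x in (0 : ℝ)..(t - τ), x ^ (α - 1) * ((t - τ) - x) ^ (β - 1) := by
    have := intervalIntegral.integral_comp_sub_right (a := τ) (b := t)
      (fun x : ℝ => x ^ (α - 1) * ((t - τ) - x) ^ (β - 1)) τ
    rw [sub_self] at this
    rw [← this]
    refine intervalIntegral.integral_congr fun s _ => ?_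
    simp only [sub_sub_sub_cancel_right]
    ring
  rw [e1]
  apply Complex.ofReal_injective
  have hb := Complex.betaIntegral_scaled (α : ℂ) (β : ℂ) hL
  rw [Complex.betaIntegral_eq_Gamma_mul_div _ _ (by simpa using hα) (by simpa using hβ)] at hb
  rw [← intervalIntegral.integral_ofReal]
  push_cast
  rw [Complex.ofReal_cpow hL.le]
  rw [← Complex.Gamma_ofReal, ← Complex.Gamma_ofReal, ← Complex.Gamma_ofReal]
  push_cast
  push_cast at hb
  rw [← hb]
  rw [intervalIntegral.integral_of_le hL.le, intervalIntegral.integral_of_le hL.le]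
  refine setIntegral_congr_fun measurableSet_Ioc fun x hx => ?_
  rw [Complex.ofReal_cpow hx.1.le, Complex.ofReal_cpow (sub_nonneg.2 hx.2)]
  push_cast
  rfl

theorem intervalIntegrable_beta_kernel {α β τ t : ℝ} (hα : 0 < α) (hβ : 0 < β) (h : τ < t) :
    IntervalIntegrable (fun s => (t - s) ^ (β - 1) * (s - τ) ^ (α - 1)) volume τ t := by
  -- A non-integrable function has integral `0`, whereas the Beta integral is positive.
  by_contra hc
  have h0 := intervalIntegral.integral_undef hc
  rw [integral_beta_kernel hα hβ h] at h0
  have h1 := Real.Gamma_pos_of_pos hα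
  have h2 := Real.Gamma_pos_of_pos hβ
  have h3 := Real.Gamma_pos_of_pos (add_pos hα hβ)
  have h4 := Real.rpow_pos_of_pos (sub_pos.2 h) (α + β - 1)
  exact absurd h0 (by positivity)

theorem intervalIntegrable_kernel_mul {γ a t : ℝ} (hγ : 0 < γ) (h : a ≤ t) {g : ℝ → ℝ}
    (hg : Continuous g) :
    IntervalIntegrable (fun s => (t - s) ^ (γ - 1) * g s) volume a t := by
  rcases h.eq_or_lt with rfl | h
  · exact IntervalIntegrable.refl
  have := intervalIntegrable_beta_kernel (α := 1) one_pos hγ h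
  simp only [sub_self, Real.rpow_zero, mul_one] at this
  exact this.mul_continuousOn hg.continuousOn

theorem rlInt_self (a γ : ℝ) (g : ℝ → ℝ) : rlInt a γ g a = 0 := by simp [rlInt]

/-! ### The semigroup law -/

/-- The semigroup law without the normalising Gamma factors: exchange the order of integration
over the triangle `a < τ < s ≤ t` and evaluate the inner integral in `s` by the Beta integral. The
integrability of the outer integrand comes with Fubini's theorem and is used later to split sums. -/
theorem semigroup_aux {α β a t : ℝ} (hα : 0 < α) (hβ : 0 < β) (hat : a < t) {g : ℝ → ℝ}
    (hg : Continuous g) :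
    IntervalIntegrable (fun s => (t - s) ^ (β - 1) * ∫ τ in a..s, (s - τ) ^ (α - 1) * g τ)
      volume a t ∧
    ∫ s in a..t, (t - s) ^ (β - 1) * ∫ τ in a..s, (s - τ) ^ (α - 1) * g τ =
      (Real.Gamma α * Real.Gamma β / Real.Gamma (α + β)) *
        ∫ τ in a..t, (t - τ) ^ (α + β - 1) * g τ := by
  set B := Real.Gamma α * Real.Gamma β / Real.Gamma (α + β) with hB
  -- The integrand of the double integral, extended by zero off the triangle `τ < s`.
  let F : ℝ → ℝ → ℝ := fun s τ =>
    if τ < s then (t - s) ^ (β - 1) * ((s - τ) ^ (α - 1) * g τ) else 0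
  let μ : Measure ℝ := volume.restrict (Ioc a t)
  have hgm := hg.measurable
  have hFm : Measurable (Function.uncurry F) := by
    refine Measurable.ite (measurableSet_lt measurable_snd measurable_fst) ?_ measurable_const
    fun_prop
  have hrow : ∀ s ∈ Ioc a t, ∫ τ, F s τ ∂μ =
      (t - s) ^ (β - 1) * ∫ τ in a..s, (s - τ) ^ (α - 1) * g τ := by
    intro s hs
    have h1 : (fun τ => F s τ) = (Iio s).indicator
        (fun τ => (t - s) ^ (β - 1) * ((s - τ) ^ (α - 1) * g τ)) := by
      ext τ; simp [F, indicator]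
    rw [h1, MeasureTheory.integral_indicator measurableSet_Iio, Measure.restrict_restrict
      measurableSet_Iio, intervalIntegral.integral_of_le hs.1.le, integral_Ioc_eq_integral_Ioo,
      MeasureTheory.integral_const_mul]
    congr 3
    ext x
    simp only [mem_inter_iff, mem_Iio, mem_Ioc, mem_Ioo]
    have := hs.2
    exact ⟨fun h => ⟨h.2.1, h.1⟩, fun h => ⟨h.2, h.1, by linarith [h.2]⟩⟩
  have hcolset : ∀ τ ∈ Ioc a t, Ioi τ ∩ Ioc a t = Ioc τ t := by
    intro τ hτ
    ext x
    simp only [mem_inter_iff, mem_Ioi, mem_Ioc]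
    exact ⟨fun h => ⟨h.1, h.2.2⟩, fun h => ⟨h.1, hτ.1.trans h.1, h.2⟩⟩
  have hcolfun : ∀ τ, (fun s => F s τ) = (Ioi τ).indicator
        (fun s => (t - s) ^ (β - 1) * (s - τ) ^ (α - 1) * g τ) := by
    intro τ; ext s; simp [F, indicator, mul_assoc]
  have hker : ∀ τ ∈ Ioc a t,
      IntegrableOn (fun s => (t - s) ^ (β - 1) * (s - τ) ^ (α - 1)) (Ioc τ t) := by
    intro τ hτ
    rcases hτ.2.eq_or_lt with h | h
    · simp [h]
    · exact (intervalIntegrable_iff_integrableOn_Ioc_of_le h.le).1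
        (intervalIntegrable_beta_kernel hα hβ h)
  have hcolint : ∀ τ ∈ Ioc a t, Integrable (fun s => F s τ) μ := by
    intro τ hτ
    rw [hcolfun, integrable_indicator_iff measurableSet_Ioi, IntegrableOn,
      Measure.restrict_restrict measurableSet_Ioi, hcolset τ hτ]
    exact (hker τ hτ).mul_const _
  have hkerint : ∀ τ ∈ Ioo a t,
      ∫ s in Ioc τ t, (t - s) ^ (β - 1) * (s - τ) ^ (α - 1) = (t - τ) ^ (α + β - 1) * B := by
    intro τ hτ
    rw [← intervalIntegral.integral_of_le hτ.2.le, integral_beta_kernel hα hβ hτ.2]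
  have hcol : ∀ τ ∈ Ioo a t, ∫ s, F s τ ∂μ = B * ((t - τ) ^ (α + β - 1) * g τ) := by
    intro τ hτ
    rw [hcolfun, MeasureTheory.integral_indicator measurableSet_Ioi,
      Measure.restrict_restrict measurableSet_Ioi, hcolset τ ⟨hτ.1, hτ.2.le⟩,
      MeasureTheory.integral_mul_const, hkerint τ hτ]
    ring
  have hcolnorm : ∀ τ ∈ Ioo a t, ∫ s, ‖F s τ‖ ∂μ = B * ((t - τ) ^ (α + β - 1) * |g τ|) := by
    intro τ hτ
    have h1 : (fun s => ‖F s τ‖) = (Ioi τ).indicator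
        (fun s => ‖(t - s) ^ (β - 1) * (s - τ) ^ (α - 1) * g τ‖) := by
      ext s; rw [congrFun (hcolfun τ) s, norm_indicator_eq_indicator_norm]
    rw [h1, MeasureTheory.integral_indicator measurableSet_Ioi,
      Measure.restrict_restrict measurableSet_Ioi, hcolset τ ⟨hτ.1, hτ.2.le⟩]
    have h2 : ∀ s ∈ Ioc τ t, ‖(t - s) ^ (β - 1) * (s - τ) ^ (α - 1) * g τ‖ =
        (t - s) ^ (β - 1) * (s - τ) ^ (α - 1) * |g τ| := by
      intro s hs
      rw [Real.norm_eq_abs, abs_mul, abs_of_nonneg]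
      exact mul_nonneg (Real.rpow_nonneg (sub_nonneg.2 hs.2) _)
        (Real.rpow_nonneg (sub_nonneg.2 hs.1.le) _)
    rw [setIntegral_congr_fun measurableSet_Ioc h2,
      MeasureTheory.integral_mul_const, hkerint τ hτ]
    ring
  -- The endpoint `τ = t` is discarded: the Beta integral needs a nondegenerate interval.
  have hae : ∀ᵐ τ ∂μ, τ ∈ Ioo a t := by
    have : μ = volume.restrict (Ioo a t) := (restrict_Ioo_eq_restrict_Ioc).symm
    rw [this]
    exact ae_restrict_mem measurableSet_Ioo
  have hInt : Integrable (Function.uncurry F) (μ.prod μ) := by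
    rw [integrable_prod_iff' hFm.aestronglyMeasurable]
    refine ⟨(ae_restrict_mem measurableSet_Ioc).mono hcolint, ?_⟩
    have h1 := (intervalIntegrable_iff_integrableOn_Ioc_of_le hat.le).1
      (intervalIntegrable_kernel_mul (add_pos hα hβ) hat.le hg.abs)
    refine (h1.const_mul B).congr ?_
    filter_upwards [hae] with τ hτ
    exact (hcolnorm τ hτ).symm
  have hrow' : ∀ᵐ s ∂μ, ∫ τ, F s τ ∂μ =
      (t - s) ^ (β - 1) * ∫ τ in a..s, (s - τ) ^ (α - 1) * g τ :=
    (ae_restrict_mem measurableSet_Ioc).mono hrow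
  constructor
  · rw [intervalIntegrable_iff_integrableOn_Ioc_of_le hat.le]
    exact hInt.integral_prod_left.congr hrow'
  · rw [intervalIntegral.integral_of_le hat.le, intervalIntegral.integral_of_le hat.le,
      ← MeasureTheory.integral_const_mul]
    have := integral_integral_swap hInt
    rw [integral_congr_ae hrow'] at this
    rw [this]
    exact integral_congr_ae (hae.mono hcol)

/-- The semigroup law `I^β I^α g = I^(α+β) g` for continuous `g`. -/
theorem rlInt_rlInt {α β a t : ℝ} (hα : 0 < α) (hβ : 0 < β) (hat : a ≤ t) {g : ℝ → ℝ}
    (hg : Continuous g) :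
    rlInt a β (rlInt a α g) t = rlInt a (α + β) g t := by
  rcases hat.eq_or_lt with rfl | hat
  · simp only [rlInt_self]
  have h1 := (Real.Gamma_pos_of_pos hα).ne'
  have h2 := (Real.Gamma_pos_of_pos hβ).ne'
  have h := (semigroup_aux hα hβ hat hg).2
  unfold rlInt
  simp only [mul_left_comm _ (1 / Real.Gamma α), intervalIntegral.integral_const_mul]
  rw [h]
  field_simp

theorem intervalIntegrable_kernel_mul_rlInt {α β a t : ℝ} (hα : 0 < α) (hβ : 0 < β)
    (hat : a ≤ t) {g : ℝ → ℝ} (hg : Continuous g) :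
    IntervalIntegrable (fun s => (t - s) ^ (β - 1) * rlInt a α g s) volume a t := by
  rcases hat.eq_or_lt with rfl | hat
  · exact IntervalIntegrable.refl
  refine ((semigroup_aux hα hβ hat hg).1.const_mul (1 / Real.Gamma α)).congr ?_
  intro s _
  simp only [rlInt]
  ring

theorem intervalIntegrable_rlInt {α a t : ℝ} (hα : 0 < α)
    (hat : a ≤ t) {g : ℝ → ℝ} (hg : Continuous g) :
    IntervalIntegrable (rlInt a α g) volume a t := by
  simpa using intervalIntegrable_kernel_mul_rlInt hα one_pos hat hg

/-! ### Integer orders -/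

theorem rlInt_one (a : ℝ) (g : ℝ → ℝ) (t : ℝ) : rlInt a 1 g t = ∫ τ in a..t, g τ := by
  simp [rlInt]

theorem rlInt_add_one {α a t : ℝ} (hα : 0 < α) (hat : a ≤ t) {g : ℝ → ℝ} (hg : Continuous g) :
    rlInt a (α + 1) g t = ∫ τ in a..t, rlInt a α g τ := by
  rw [← rlInt_rlInt hα one_pos hat hg, rlInt_one]

theorem hasDerivAt_primitive {a t : ℝ} (hat : a < t) {g : ℝ → ℝ}
    (hgi : IntervalIntegrable g volume a t) (hg : ContinuousOn g (Ioi a)) :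
    HasDerivAt (fun u => ∫ τ in a..u, g τ) (g t) t :=
  intervalIntegral.integral_hasDerivAt_right hgi
    (hg.stronglyMeasurableAtFilter isOpen_Ioi t hat) (hg.continuousAt (Ioi_mem_nhds hat))

theorem hasDerivAt_rlInt_one {a t : ℝ} {g : ℝ → ℝ} (hg : Continuous g) :
    HasDerivAt (rlInt a 1 g) (g t) t := by
  rw [funext (rlInt_one a g)]
  exact intervalIntegral.integral_hasDerivAt_right (hg.intervalIntegrable _ _)
    (hg.stronglyMeasurableAtFilter _ _) hg.continuousAt

theorem hasDerivAt_rlInt_add_one {α a t : ℝ} (hα : 0 < α) (hat : a < t) {g : ℝ → ℝ}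
    (hg : Continuous g) (hc : ContinuousOn (rlInt a α g) (Ioi a)) :
    HasDerivAt (rlInt a (α + 1) g) (rlInt a α g t) t := by
  refine (hasDerivAt_primitive hat (intervalIntegrable_rlInt hα hat.le hg) hc).congr_of_eventuallyEq
    ?_
  filter_upwards [Ioi_mem_nhds hat] with u hu
  exact rlInt_add_one hα (le_of_lt hu) hg

/-- Iterated integrals of positive integer order are continuous to the right of `a`; the order is
written `n + 1` because `rlInt a 0 g` is not `g` but the junk value `0` (as `Γ 0 = 0` in Mathlib). -/
theorem continuousOn_rlInt_nat (a : ℝ) {g : ℝ → ℝ} (hg : Continuous g) (n : ℕ) :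
    ContinuousOn (rlInt a ((n : ℝ) + 1) g) (Ioi a) := by
  induction n with
  | zero =>
    intro t _
    simpa using (hasDerivAt_rlInt_one hg).continuousAt.continuousWithinAt
  | succ n ih =>
    intro t ht
    push_cast
    exact (hasDerivAt_rlInt_add_one (by positivity) ht hg ih).continuousAt.continuousWithinAt

theorem iteratedDeriv_rlInt_nat (a : ℝ) {g : ℝ → ℝ} (hg : Continuous g) (n : ℕ) {t : ℝ}
    (hat : a < t) : iteratedDeriv (n + 1) (rlInt a ((n : ℝ) + 1) g) t = g t := by
  induction n with
  | zero => simpa using (hasDerivAt_rlInt_one hg).deriv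
  | succ n ih =>
    rw [iteratedDeriv_succ', ← ih]
    refine Filter.EventuallyEq.iteratedDeriv_eq _ ?_
    filter_upwards [Ioi_mem_nhds hat] with u hu
    push_cast
    exact (hasDerivAt_rlInt_add_one (by positivity) hu hg (continuousOn_rlInt_nat a hg n)).deriv

/-! ### The derivative of a fractional integral -/

/-- The denominator `γ Γ(γ)` is `Γ(γ + 1)`. -/
theorem rlInt_const {γ a t : ℝ} (hγ : 0 < γ) (hat : a ≤ t) (c : ℝ) :
    rlInt a γ (fun _ => c) t = c * ((t - a) ^ γ / (γ * Real.Gamma γ)) := by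
  rcases hat.eq_or_lt with rfl | hat
  · simp [rlInt_self, Real.zero_rpow hγ.ne']
  have h := integral_beta_kernel (α := 1) one_pos hγ hat
  simp only [sub_self, Real.rpow_zero, mul_one, Real.Gamma_one, one_mul,
    add_comm (1 : ℝ) γ] at h
  have h1 := (Real.Gamma_pos_of_pos hγ).ne'
  rw [Real.Gamma_add_one hγ.ne', add_sub_cancel_right] at h
  simp only [rlInt, intervalIntegral.integral_mul_const, h]
  field_simp

/-- First-order fractional Taylor formula: apply `I^γ` to `g = g a + I^1 g'` and use
`I^γ I^1 = I^(γ+1) = I^1 I^γ`. -/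
theorem rlInt_eq_taylor {γ a t : ℝ} (hγ : 0 < γ) (hat : a ≤ t) {g : ℝ → ℝ}
    (hg : ContDiff ℝ 1 g) :
    rlInt a γ g t = g a * ((t - a) ^ γ / (γ * Real.Gamma γ)) +
      ∫ s in a..t, rlInt a γ (deriv g) s := by
  have hg' : Continuous (deriv g) := hg.continuous_deriv le_rfl
  have hdecomp : ∀ s, g s = g a + rlInt a 1 (deriv g) s := by
    intro s
    rw [rlInt_one, intervalIntegral.integral_deriv_eq_sub
      (fun x _ => hg.differentiable one_ne_zero x) (hg'.intervalIntegrable _ _)]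
    ring
  have hcont : Continuous (rlInt a 1 (deriv g)) :=
    continuous_iff_continuousAt.2 fun s => (hasDerivAt_rlInt_one hg').continuousAt
  rw [← rlInt_add_one hγ hat hg', add_comm γ 1, ← rlInt_rlInt one_pos hγ hat hg',
    ← rlInt_const hγ hat]
  have : g = fun s => g a + rlInt a 1 (deriv g) s := funext hdecomp
  conv_lhs => rw [this]
  unfold rlInt
  rw [← mul_add, ← intervalIntegral.integral_add]
  · simp only [mul_add]
  · exact intervalIntegrable_kernel_mul hγ hat continuous_const
  · exact intervalIntegrable_kernel_mul hγ hat hcont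

/-- For `C^1` functions continuity of `I^γ g` can be read off from `rlInt_eq_taylor`, whose last
term is a primitive of an integrable function. -/
theorem continuousOn_rlInt {γ a : ℝ} (hγ : 0 < γ) {g : ℝ → ℝ} (hg : ContDiff ℝ 1 g) :
    ContinuousOn (rlInt a γ g) (Ioi a) := by
  have hg' : Continuous (deriv g) := hg.continuous_deriv le_rfl
  intro t (ht : a < t)
  refine ContinuousAt.continuousWithinAt ?_
  have hprim : ContinuousAt (fun u => ∫ s in a..u, rlInt a γ (deriv g) s) t := by
    have hi := intervalIntegrable_rlInt hγ (show a ≤ t + 1 by linarith) hg'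
    have := intervalIntegral.continuousOn_primitive_interval' hi left_mem_uIcc
    refine this.continuousAt ?_
    rw [uIcc_of_le (by linarith)]
    exact Icc_mem_nhds ht (by linarith)
  have hpow : ContinuousAt (fun u : ℝ => g a * ((u - a) ^ γ / (γ * Real.Gamma γ))) t := by
    refine continuousAt_const.mul (ContinuousAt.div_const ?_ _)
    exact (continuousAt_id.sub continuousAt_const).rpow_const (Or.inr hγ.le)
  refine (hpow.add hprim).congr ?_
  filter_upwards [Ioi_mem_nhds ht] with u hu
  exact (rlInt_eq_taylor hγ (le_of_lt hu) hg).symm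

/-- Differentiation of `rlInt_eq_taylor`. A second derivative of `g` is assumed so that
`I^γ g'` is continuous by `continuousOn_rlInt` and the fundamental theorem of calculus applies
at every point. -/
theorem deriv_rlInt {γ a t : ℝ} (hγ : 0 < γ) (hat : a < t) {g : ℝ → ℝ} (hg : ContDiff ℝ 2 g) :
    deriv (rlInt a γ g) t = g a * ((t - a) ^ (γ - 1) / Real.Gamma γ) + rlInt a γ (deriv g) t := by
  have hg1 : ContDiff ℝ 1 g := hg.of_le (by norm_num)
  have hg' : ContDiff ℝ 1 (deriv g) := by
    have : ContDiff ℝ (1 + 1) g := by convert hg using 1; norm_num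
    exact (contDiff_succ_iff_deriv.1 this).2.2
  have h1 := hasDerivAt_primitive hat (intervalIntegrable_rlInt hγ hat.le hg'.continuous)
    (continuousOn_rlInt hγ hg')
  have h2 : HasDerivAt (fun u : ℝ => g a * ((u - a) ^ γ / (γ * Real.Gamma γ)))
      (g a * (1 * γ * (t - a) ^ (γ - 1) / (γ * Real.Gamma γ))) t :=
    ((((hasDerivAt_id t).sub_const a).rpow_const
      (Or.inl (sub_pos.2 hat).ne')).div_const _).const_mul _
  have h3 : HasDerivAt (rlInt a γ g) _ t := (h2.add h1).congr_of_eventuallyEq (by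
    filter_upwards [Ioi_mem_nhds hat] with u hu
    exact rlInt_eq_taylor hγ (le_of_lt hu) hg1)
  rw [h3.deriv]
  have := (Real.Gamma_pos_of_pos hγ).ne'
  field_simp

/-! ### The inverse relations -/

/-- By `deriv_rlInt` the derivative of `I^(1-α) g` is a multiple of `(s - a)^(-α)` plus
`I^(1-α) g'`. Applying `I^α`, the first part gives `g a` by the Beta integral with
`Γ(α + (1 - α)) = 1`, and the second gives `I^1 g' = g t - g a` by the semigroup law. -/
theorem rlInt_deriv_rlInt {α a t : ℝ} (h0 : 0 < α) (h1 : α < 1) (hat : a < t) {g : ℝ → ℝ}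
    (hg : ContDiff ℝ 2 g) :
    rlInt a α (deriv (rlInt a (1 - α) g)) t = g t := by
  have hβ : 0 < 1 - α := sub_pos.2 h1
  have hg1 : ContDiff ℝ 1 g := hg.of_le (by norm_num)
  have hg' : Continuous (deriv g) := hg1.continuous_deriv le_rfl
  have hG1 := (Real.Gamma_pos_of_pos h0).ne'
  have hG2 := (Real.Gamma_pos_of_pos hβ).ne'
  have hsg := rlInt_rlInt hβ h0 hat.le hg'
  rw [sub_add_cancel, rlInt_one, intervalIntegral.integral_deriv_eq_sub
      (fun x _ => hg1.differentiable one_ne_zero x) (hg'.intervalIntegrable _ _)] at hsg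
  have hbeta := integral_beta_kernel hβ h0 hat
  rw [sub_add_cancel, sub_self, Real.rpow_zero, Real.Gamma_one, div_one, one_mul] at hbeta
  have hcongr : ∫ s in a..t, (t - s) ^ (α - 1) * deriv (rlInt a (1 - α) g) s =
      ∫ s in a..t, ((g a / Real.Gamma (1 - α)) * ((t - s) ^ (α - 1) * (s - a) ^ (1 - α - 1)) +
        (t - s) ^ (α - 1) * rlInt a (1 - α) (deriv g) s) := by
    rw [intervalIntegral.integral_of_le hat.le, intervalIntegral.integral_of_le hat.le]
    refine setIntegral_congr_fun measurableSet_Ioc fun s hs => ?_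
    rw [deriv_rlInt hβ hs.1 hg]
    ring
  rw [rlInt, hcongr, intervalIntegral.integral_add
    ((intervalIntegrable_beta_kernel hβ h0 hat).const_mul _)
    (intervalIntegrable_kernel_mul_rlInt hβ h0 hat.le hg'), mul_add,
    intervalIntegral.integral_const_mul, hbeta]
  rw [rlInt] at hsg
  rw [hsg]
  field_simp
  ring

/-- **Inverse relations between the Riemann–Liouville derivative and integral.** If the
Taylor series of `f` at `a` converges to `f` on `[a, b]` and `n - 1 < α < n`, then for
every `t ∈ (a, b]`: `(D_RL^α (I^α f))(t) = f(t)`; and if moreover `0 < α < 1`, also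
`(I^α (D_RL^α f))(t) = f(t)`. -/
theorem rlDeriv_rlInt_inverse
    (n : ℕ) (hn : 0 < n) (α : ℝ) (hα₁ : (n : ℝ) - 1 < α) (hα₂ : α < n)
    (a b : ℝ) (hab : a < b) (f : ℝ → ℝ) (hf : ContDiff ℝ (⊤ : ℕ∞) f)
    (hTaylor : ∀ t ∈ Set.Icc a b,
      HasSum (fun k : ℕ => iteratedDeriv k f a / (k.factorial : ℝ) * (t - a) ^ k) (f t)) :
    ∀ t ∈ Set.Ioc a b,
      iteratedDeriv n (fun s => rlInt a ((n : ℝ) - α) (fun u => rlInt a α f u) s) t = f t ∧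
      (0 < α → α < 1 →
        rlInt a α (fun s => deriv (fun u => rlInt a (1 - α) f u) s) t = f t) := by
  intro t ht
  refine ⟨?_, fun h0 h1 => rlInt_deriv_rlInt h0 h1 ht.1 (contDiff_infty.1 hf 2)⟩
  obtain ⟨m, rfl⟩ : ∃ m, n = m + 1 := ⟨n - 1, by omega⟩
  push_cast at hα₁ hα₂ ⊢
  have hα : 0 < α := by
    have : (0 : ℝ) ≤ m := m.cast_nonneg
    linarith
  rw [← iteratedDeriv_rlInt_nat a hf.continuous m ht.1]
  refine Filter.EventuallyEq.iteratedDeriv_eq _ ?_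
  filter_upwards [Ioi_mem_nhds ht.1] with s hs
  rw [show (fun u => rlInt a α f u) = rlInt a α f from rfl,
    rlInt_rlInt hα (sub_pos.2 hα₂) (le_of_lt hs) hf.continuous, add_sub_cancel]
end

section
/- Let n be a positive integer, let a < b, and let f : ℝ → ℝ be infinitely differentiable with its Taylor series at a converging to f on [a,b], i.e. f(t) = Σ_{k=0}^∞ f^{(k)}(a)/k! · (t−a)^k for every t ∈ [a,b]. Fix t ∈ (a,b]. Then, as α ranges over (n−1,n): (i) lim_{α → n⁻} (1/Γ(n−α)) ∫_a^t (t−τ)^{n−α−1} f^{(n)}(τ) dτ = f^{(n)}(t); and (ii) lim_{α → (n−1)⁺} (1/Γ(n−α)) ∫_a^t (t−τ)^{n−α−1} f^{(n)}(τ) dτ = f^{(n−1)}(t) − f^{(n−1)}(a). In particular the Caputo fractional derivative D_C^α f(t) is continuous in the order α on (n−1,n], but in general right-discontinuous at the integer order α = n−1. -/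
open Real intervalIntegral Filter Topology

/-! Write `s = n - α ∈ (0, 1)` and `g = f⁽ⁿ⁾`. The kernel `(t - τ) ^ (s - 1) / Γ(s)` degenerates as
`s → 0`, but one integration by parts, with `s Γ(s) = Γ(s + 1)`, removes the singularity:
`(1 / Γ(s)) ∫ (t - τ) ^ (s - 1) g = ((t - a) ^ s g(a) + ∫ (t - τ) ^ s g') / Γ(s + 1)`
(`caputo_by_parts`, `regularized`). By dominated convergence the right-hand side is continuous in
`s` on `[0, 1]` (`continuousWithinAt_regularized`). At `s = 0` it equals `g(t)`, and at `s = 1` the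
same identity read backwards gives `∫ g = f⁽ⁿ⁻¹⁾(t) - f⁽ⁿ⁻¹⁾(a)`. -/

/-- The integrated-by-parts form of the Riemann–Liouville integral of order `s` of `g` on `[a, t]`.
Unlike the original integral, it makes sense for `s = 0` as well. -/
noncomputable def regularized (a t : ℝ) (g : ℝ → ℝ) (s : ℝ) : ℝ :=
  (1 / Real.Gamma (s + 1)) * ((t - a) ^ s * g a + ∫ τ in a..t, (t - τ) ^ s * deriv g τ)

theorem caputo_by_parts {a t s : ℝ} (hat : a < t) (hs : 0 < s) {g : ℝ → ℝ} (hg : ContDiff ℝ 1 g) :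
    (1 / Real.Gamma s) * ∫ τ in a..t, (t - τ) ^ (s - 1) * g τ = regularized a t g s := by
  have hgd : Differentiable ℝ g := hg.differentiable (by norm_num)
  have hgc : Continuous (deriv g) := hg.continuous_deriv (by norm_num)
  have hkernel : IntervalIntegrable (fun τ : ℝ => (t - τ) ^ (s - 1)) MeasureTheory.volume a t := by
    have h := (intervalIntegral.intervalIntegrable_rpow' (a := t - a) (b := 0)
      (r := s - 1) (by linarith)).comp_sub_left t
    simpa using h
  have hparts := intervalIntegral.integral_mul_deriv_eq_deriv_mul_of_hasDerivAt
    (a := a) (b := t) (u := g) (v := fun τ => -(t - τ) ^ s)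
    (u' := deriv g) (v' := fun τ => s * (t - τ) ^ (s - 1))
    hgd.continuous.continuousOn
    (by
      refine Continuous.continuousOn (Continuous.neg ?_)
      exact (continuous_const.sub continuous_id).rpow_const (fun _ => Or.inr hs.le))
    (fun x _ => (hgd x).hasDerivAt)
    (by
      intro x hx
      rw [max_eq_right hat.le] at hx
      have h := (((hasDerivAt_id x).const_sub t).rpow_const (p := s)
        (Or.inl (sub_pos.2 hx.2).ne')).neg
      refine h.congr_deriv ?_
      simp)
    (hgc.intervalIntegrable _ _) (hkernel.const_mul s)
  have hleft : ∫ τ in a..t, g τ * (s * (t - τ) ^ (s - 1))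
      = s * ∫ τ in a..t, (t - τ) ^ (s - 1) * g τ := by
    rw [← intervalIntegral.integral_const_mul]
    congr 1
    ext τ
    ring
  have hright : ∫ τ in a..t, deriv g τ * (-(t - τ) ^ s)
      = -∫ τ in a..t, (t - τ) ^ s * deriv g τ := by
    rw [← intervalIntegral.integral_neg]
    congr 1
    ext τ
    ring
  rw [hleft, hright, sub_self, Real.zero_rpow hs.ne'] at hparts
  have hval : (t - a) ^ s * g a + ∫ τ in a..t, (t - τ) ^ s * deriv g τ
      = s * ∫ τ in a..t, (t - τ) ^ (s - 1) * g τ := by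
    rw [hparts]
    ring
  have hG : Real.Gamma s ≠ 0 := (Real.Gamma_pos_of_pos hs).ne'
  rw [regularized, hval, Real.Gamma_add_one hs.ne']
  field_simp

theorem continuousWithinAt_regularized {a t s₀ : ℝ} (hat : a < t) (hs₀ : 0 ≤ s₀) {g : ℝ → ℝ}
    (hg : ContDiff ℝ 1 g) :
    ContinuousWithinAt (regularized a t g) (Set.Icc 0 1) s₀ := by
  have hgc : Continuous (deriv g) := hg.continuous_deriv (by norm_num)
  have hGamma : ContinuousAt (fun s : ℝ => 1 / Real.Gamma (s + 1)) s₀ := by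
    have hpos : 0 < s₀ + 1 := by linarith
    have h : ContinuousAt Real.Gamma (s₀ + 1) :=
      (Real.differentiableAt_Gamma fun m hm => by
        have : (0 : ℝ) ≤ m := m.cast_nonneg
        linarith).continuousAt
    have h' : ContinuousAt (fun s : ℝ => Real.Gamma (s + 1)) s₀ :=
      ContinuousAt.comp (f := fun s : ℝ => s + 1) h (by fun_prop)
    exact continuousAt_const.div h' (Real.Gamma_pos_of_pos hpos).ne'
  have hpow : ContinuousAt (fun s : ℝ => (t - a) ^ s * g a) s₀ :=
    (Real.continuousAt_const_rpow (sub_pos.2 hat).ne').mul continuousAt_const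
  refine hGamma.continuousWithinAt.mul (hpow.continuousWithinAt.add ?_)
  refine intervalIntegral.continuousWithinAt_of_dominated_interval
    (bound := fun τ => (1 + (t - τ)) * |deriv g τ|) ?_ ?_ ?_ ?_
  · refine Eventually.of_forall fun s => Measurable.aestronglyMeasurable ?_
    exact ((measurable_const.sub measurable_id).pow_const s).mul hgc.measurable
  · filter_upwards [self_mem_nhdsWithin] with s hs
    refine Eventually.of_forall fun τ hτ => ?_
    rw [Set.uIoc_of_le hat.le] at hτ
    have hx : 0 ≤ t - τ := sub_nonneg.2 hτ.2
    rw [norm_mul, Real.norm_eq_abs, Real.norm_eq_abs, abs_of_nonneg (Real.rpow_nonneg hx s)]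
    refine mul_le_mul_of_nonneg_right ?_ (abs_nonneg _)
    rcases le_total (t - τ) 1 with h | h
    · linarith [Real.rpow_le_one hx h hs.1]
    · have := Real.rpow_le_rpow_of_exponent_le h hs.2
      rw [Real.rpow_one] at this
      linarith
  · exact Continuous.intervalIntegrable (by fun_prop) _ _
  · -- At `τ = t` the map `s ↦ 0 ^ s` jumps at `s = 0`, so this null set is discarded.
    have hne : ∀ᵐ τ : ℝ, τ ≠ t := by
      simp [MeasureTheory.ae_iff]
    filter_upwards [hne] with τ hτ _
    have h : ContinuousAt (fun s : ℝ => (t - τ) ^ s * deriv g τ) s₀ :=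
      (Real.continuousAt_const_rpow (sub_ne_zero.2 hτ.symm)).mul continuousAt_const
    exact h.continuousWithinAt

/-- Substituting `s = c - α` transfers the continuity of `regularized` to the Caputo
derivative, which is the case `c = n`, `g = f⁽ⁿ⁾`. -/
theorem tendsto_caputo {a t c α₀ : ℝ} (hat : a < t) (hα₀ : α₀ ≤ c) {g : ℝ → ℝ}
    (hg : ContDiff ℝ 1 g) :
    Tendsto (fun α : ℝ => (1 / Real.Gamma (c - α)) * ∫ τ in a..t, (t - τ) ^ (c - α - 1) * g τ)
      (𝓝[Set.Ioo (c - 1) c] α₀) (𝓝 (regularized a t g (c - α₀))) := by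
  have hsub : Tendsto (fun α : ℝ => c - α) (𝓝[Set.Ioo (c - 1) c] α₀)
      (𝓝[Set.Icc 0 1] (c - α₀)) := by
    refine tendsto_nhdsWithin_of_tendsto_nhds_of_eventually_within _ ?_ ?_
    · exact (Continuous.tendsto (by fun_prop) α₀).mono_left nhdsWithin_le_nhds
    · filter_upwards [self_mem_nhdsWithin] with α hα
      constructor <;> linarith [hα.1, hα.2]
  have hlim := (continuousWithinAt_regularized hat (sub_nonneg.2 hα₀) hg).tendsto.comp hsub
  refine hlim.congr' ?_
  filter_upwards [self_mem_nhdsWithin] with α hα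
  exact (caputo_by_parts hat (sub_pos.2 hα.2) hg).symm

theorem regularized_zero {a t : ℝ} {g : ℝ → ℝ} (hg : ContDiff ℝ 1 g) :
    regularized a t g 0 = g t := by
  have hgd : Differentiable ℝ g := hg.differentiable (by norm_num)
  have hgc : Continuous (deriv g) := hg.continuous_deriv (by norm_num)
  have hint : ∫ τ in a..t, deriv g τ = g t - g a :=
    intervalIntegral.integral_deriv_eq_sub (fun x _ => hgd x) (hgc.intervalIntegrable _ _)
  simp [regularized, hint]

theorem regularized_one {a t : ℝ} (hat : a < t) {g : ℝ → ℝ} (hg : ContDiff ℝ 1 g) :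
    regularized a t g 1 = ∫ τ in a..t, g τ := by
  rw [← caputo_by_parts hat one_pos hg]
  simp

/-- **Continuity of the Caputo fractional derivative in the order near the endpoints.**
If the Taylor series of `f` at `a` converges to `f` on `[a, b]` and `t ∈ (a, b]`, then
as `α` ranges over `(n-1, n)`:
(i) `(D_C^α f)(t) → f⁽ⁿ⁾(t)` as `α → n⁻`, and
(ii) `(D_C^α f)(t) → f⁽ⁿ⁻¹⁾(t) − f⁽ⁿ⁻¹⁾(a)` as `α → (n-1)⁺`.
In particular the Caputo derivative is continuous in the order on `(n-1, n]` but in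
general right-discontinuous at `α = n-1`. -/
theorem caputo_order_limits
    (n : ℕ) (hn : 0 < n) (a b : ℝ) (hab : a < b) (f : ℝ → ℝ) (hf : ContDiff ℝ (⊤ : ℕ∞) f)
    (hTaylor : ∀ t ∈ Set.Icc a b,
      HasSum (fun k : ℕ => iteratedDeriv k f a / (k.factorial : ℝ) * (t - a) ^ k) (f t)) :
    ∀ t ∈ Set.Ioc a b,
      Tendsto
        (fun α : ℝ => (1 / Real.Gamma ((n : ℝ) - α)) *
          ∫ τ in a..t, (t - τ) ^ ((n : ℝ) - α - 1) * iteratedDeriv n f τ)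
        (𝓝[Set.Ioo ((n : ℝ) - 1) (n : ℝ)] (n : ℝ))
        (𝓝 (iteratedDeriv n f t)) ∧
      Tendsto
        (fun α : ℝ => (1 / Real.Gamma ((n : ℝ) - α)) *
          ∫ τ in a..t, (t - τ) ^ ((n : ℝ) - α - 1) * iteratedDeriv n f τ)
        (𝓝[Set.Ioo ((n : ℝ) - 1) (n : ℝ)] ((n : ℝ) - 1))
        (𝓝 (iteratedDeriv (n - 1) f t - iteratedDeriv (n - 1) f a)) := by
  intro t ht
  have hg : ContDiff ℝ 1 (iteratedDeriv n f) := by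
    rw [iteratedDeriv_eq_iterate]
    exact ContDiff.iterate_deriv' 1 n (hf.of_le (by exact_mod_cast le_top))
  constructor
  · have h := tendsto_caputo (c := (n : ℝ)) ht.1 le_rfl hg
    rwa [sub_self, regularized_zero hg] at h
  · have h := tendsto_caputo (c := (n : ℝ)) (α₀ := (n : ℝ) - 1) ht.1 (by linarith) hg
    rw [sub_sub_cancel, regularized_one ht.1 hg] at h
    obtain ⟨m, rfl⟩ : ∃ m, n = m + 1 := ⟨n - 1, by omega⟩
    have hint : ∫ τ in a..t, iteratedDeriv (m + 1) f τ
        = iteratedDeriv m f t - iteratedDeriv m f a := by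
      have hd : Differentiable ℝ (iteratedDeriv m f) :=
        hf.differentiable_iteratedDeriv m (by exact_mod_cast WithTop.coe_lt_top m)
      rw [iteratedDeriv_succ]
      refine intervalIntegral.integral_deriv_eq_sub (fun x _ => hd x) ?_
      rw [← iteratedDeriv_succ]
      exact hg.continuous.intervalIntegrable _ _
    rw [hint] at h
    exact h
end

section
/- Let a < t, let α > 0, and let f : ℝ → ℝ be continuous on [a,t]. Then the function β ↦ (1/Γ(β)) ∫_a^t (t−τ)^{β−1} f(τ) dτ (the Riemann–Liouville fractional integral of f of order β, as a function of the order) is differentiable at β = α, with derivative (1/Γ(α)) ∫_a^t (t−τ)^{α−1} f(τ) · [ln(t−τ) − Γ′(α)/Γ(α)] dτ, where Γ′ denotes the derivative of the Gamma function. -/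
/-!
The integral is differentiated under the integral sign by dominated convergence, and the factor
`1/Γ(β)` is then handled by the product rule. With `u = t - τ > 0`, the derivative of the integrand
in `β` is `u^(β-1) log u · f τ`. For `β` in the neighbourhood `(α/2, 2α)` of `α`, the power
`u^(β-1)` is at most `u^(α/2-1) + u^(2α-1)`, while `|log u| ≤ (u^ε + u^(-ε))/ε` with `ε = α/4`
(`abs_log_le_rpow_add`). The product is a combination of four powers of `u`, all of exponent
greater than `-1`, hence integrable; `f` is bounded since it is continuous on a compact interval.
-/

open Real intervalIntegral

lemma abs_log_le_rpow_add {u ε : ℝ} (hu : 0 < u) (hε : 0 < ε) :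
    |Real.log u| ≤ (u ^ ε + u ^ (-ε)) / ε := by
  have h1 := Real.log_le_rpow_div hu.le hε
  have h2 := Real.log_le_rpow_div (inv_pos.2 hu).le hε
  rw [Real.log_inv, Real.inv_rpow hu.le, ← Real.rpow_neg hu.le] at h2
  have p1 : 0 ≤ u ^ ε / ε := by positivity
  have p2 : 0 ≤ u ^ (-ε) / ε := by positivity
  rw [add_div]
  exact abs_le.2 ⟨by linarith, by linarith⟩

lemma rpow_le_rpow_add_rpow {u p q r : ℝ} (hu : 0 < u) (hp : p ≤ q) (hr : q ≤ r) :
    u ^ q ≤ u ^ p + u ^ r := by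
  have p1 : 0 < u ^ p := by positivity
  have p2 : 0 < u ^ r := by positivity
  rcases le_total u 1 with h | h
  · linarith [Real.rpow_le_rpow_of_exponent_ge hu h hp]
  · linarith [Real.rpow_le_rpow_of_exponent_le h hr]

lemma intervalIntegrable_sub_rpow (a t : ℝ) {r : ℝ} (hr : -1 < r) :
    IntervalIntegrable (fun τ => (t - τ) ^ r) MeasureTheory.volume a t := by
  have h := (intervalIntegral.intervalIntegrable_rpow' (a := t - a) (b := 0) hr).comp_sub_left t
  simpa using h

/-- Differentiation under the integral sign, together with the integrability of the differentiated
integrand. -/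
lemma hasDerivAt_integral_sub_rpow_mul
    (a t : ℝ) (hat : a < t) (α : ℝ) (hα : 0 < α)
    (f : ℝ → ℝ) (hf : ContinuousOn f (Set.Icc a t)) :
    IntervalIntegrable (fun τ => (t - τ) ^ (α - 1) * Real.log (t - τ) * f τ)
      MeasureTheory.volume a t ∧
    HasDerivAt (fun β : ℝ => ∫ τ in a..t, (t - τ) ^ (β - 1) * f τ)
      (∫ τ in a..t, (t - τ) ^ (α - 1) * Real.log (t - τ) * f τ) α := by
  obtain ⟨M, hM⟩ := isCompact_Icc.exists_bound_of_continuousOn hf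
  have hIoc : Set.uIoc a t = Set.Ioc a t := Set.uIoc_of_le hat.le
  have hfm : MeasureTheory.AEStronglyMeasurable f
      (MeasureTheory.volume.restrict (Set.uIoc a t)) := by
    rw [hIoc]
    exact (hf.mono Set.Ioc_subset_Icc_self).aestronglyMeasurable measurableSet_Ioc
  -- the endpoint `τ = t`, where `log` and `rpow` take junk values, is negligible
  have hne : ∀ᵐ τ : ℝ ∂MeasureTheory.volume, τ ≠ t := by
    simp [MeasureTheory.ae_iff]
  refine intervalIntegral.hasDerivAt_integral_of_dominated_loc_of_deriv_le
    (F := fun β τ => (t - τ) ^ (β - 1) * f τ)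
    (F' := fun β τ => (t - τ) ^ (β - 1) * Real.log (t - τ) * f τ)
    (s := Set.Ioo (α / 2) (2 * α))
    (bound := fun τ => ((t - τ) ^ (α / 2 - 1 + α / 4) + (t - τ) ^ (α / 2 - 1 + -(α / 4))
      + ((t - τ) ^ (2 * α - 1 + α / 4) + (t - τ) ^ (2 * α - 1 + -(α / 4)))) * (M / (α / 4)))
    (Ioo_mem_nhds (by linarith) (by linarith)) ?_ ?_ ?_ ?_ ?_ ?_
  · exact Filter.Eventually.of_forall fun β =>
      (Measurable.aestronglyMeasurable (by fun_prop)).mul hfm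
  · refine (intervalIntegrable_sub_rpow a t (by linarith)).mul_continuousOn ?_
    rwa [Set.uIcc_of_le hat.le]
  · exact (Measurable.aestronglyMeasurable (by fun_prop)).mul hfm
  · filter_upwards [hne] with τ hτ hmem β hβ
    rw [hIoc] at hmem
    have hu : 0 < t - τ := sub_pos.2 (lt_of_le_of_ne hmem.2 hτ)
    have hfM : |f τ| ≤ M := hM τ (Set.Ioc_subset_Icc_self hmem)
    have h1 : (t - τ) ^ (β - 1) ≤ (t - τ) ^ (α / 2 - 1) + (t - τ) ^ (2 * α - 1) :=
      rpow_le_rpow_add_rpow hu (by linarith [hβ.1]) (by linarith [hβ.2])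
    have h2 := abs_log_le_rpow_add hu (show 0 < α / 4 by linarith)
    rw [Real.norm_eq_abs, abs_mul, abs_mul, abs_of_pos (Real.rpow_pos_of_pos hu _)]
    calc (t - τ) ^ (β - 1) * |Real.log (t - τ)| * |f τ|
        ≤ ((t - τ) ^ (α / 2 - 1) + (t - τ) ^ (2 * α - 1)) *
          (((t - τ) ^ (α / 4) + (t - τ) ^ (-(α / 4))) / (α / 4)) * M := by gcongr
      _ = _ := by
        simp only [Real.rpow_add hu]
        ring
  · refine IntervalIntegrable.mul_const ?_ _
    exact ((intervalIntegrable_sub_rpow a t (by linarith)).add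
      (intervalIntegrable_sub_rpow a t (by linarith))).add
      ((intervalIntegrable_sub_rpow a t (by linarith)).add
      (intervalIntegrable_sub_rpow a t (by linarith)))
  · filter_upwards [hne] with τ hτ hmem β hβ
    rw [hIoc] at hmem
    have hu : 0 < t - τ := sub_pos.2 (lt_of_le_of_ne hmem.2 hτ)
    have h := (((hasDerivAt_id β).sub_const 1).const_rpow hu).mul_const (f τ)
    refine h.congr_deriv ?_
    simp only [id]
    ring

/-- **Differentiability of the Riemann–Liouville fractional integral with respect to the
order.** For `f` continuous on `[a, t]` and `α > 0`, the map
`β ↦ (1/Γ(β)) ∫_a^t (t-τ)^(β-1) f(τ) dτ` is differentiable at `β = α`, with derivative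
`(1/Γ(α)) ∫_a^t (t-τ)^(α-1) f(τ) (ln(t-τ) − Γ′(α)/Γ(α)) dτ`. -/
theorem rlInt_hasDerivAt_order
    (a t : ℝ) (hat : a < t) (α : ℝ) (hα : 0 < α)
    (f : ℝ → ℝ) (hf : ContinuousOn f (Set.Icc a t)) :
    HasDerivAt
      (fun β : ℝ => (1 / Real.Gamma β) * ∫ τ in a..t, (t - τ) ^ (β - 1) * f τ)
      ((1 / Real.Gamma α) *
        ∫ τ in a..t, (t - τ) ^ (α - 1) * f τ *
          (Real.log (t - τ) - deriv Real.Gamma α / Real.Gamma α))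
      α := by
  obtain ⟨hint, hder⟩ := hasDerivAt_integral_sub_rpow_mul a t hat α hα f hf
  have hΓ : Real.Gamma α ≠ 0 := (Real.Gamma_pos_of_pos hα).ne'
  have hΓd : HasDerivAt Real.Gamma (deriv Real.Gamma α) α := by
    refine (Real.differentiableAt_Gamma fun m => ?_).hasDerivAt
    have : (0 : ℝ) ≤ m := m.cast_nonneg
    linarith
  have hint0 : IntervalIntegrable (fun τ => (t - τ) ^ (α - 1) * f τ)
      MeasureTheory.volume a t := by
    refine (intervalIntegrable_sub_rpow a t (by linarith)).mul_continuousOn ?_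
    rwa [Set.uIcc_of_le hat.le]
  have hsplit : (∫ τ in a..t, (t - τ) ^ (α - 1) * f τ *
          (Real.log (t - τ) - deriv Real.Gamma α / Real.Gamma α)) =
      (∫ τ in a..t, (t - τ) ^ (α - 1) * Real.log (t - τ) * f τ) -
        (∫ τ in a..t, (t - τ) ^ (α - 1) * f τ) * (deriv Real.Gamma α / Real.Gamma α) := by
    rw [← intervalIntegral.integral_mul_const,
      ← intervalIntegral.integral_sub hint (hint0.mul_const _)]
    congr 1
    ext τ
    ring
  rw [hsplit]
  simp only [one_div]
  refine ((hΓd.inv hΓ).mul hder).congr_deriv ?_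
  simp only [Pi.inv_apply]
  field_simp
  ring
end

section
/- Let 0 < α < 1, let a < b, and let f : ℝ → ℝ be infinitely differentiable with its Taylor series at a converging to f on [a,b], i.e. f(t) = Σ_{k=0}^∞ f^{(k)}(a)/k! · (t−a)^k for every t ∈ [a,b]. Then the Riemann–Liouville fractional derivative of f exhibits the initial-time power singularity: lim_{t → a⁺} (t−a)^α · (d/dt)[(1/Γ(1−α)) ∫_a^· (·−τ)^{−α} f(τ) dτ](t) = f(a)/Γ(1−α). In particular, if f(a) ≠ 0 then |D_RL^α f(t)| → +∞ as t → a⁺. -/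
/-!
For `s > a` the substitution `τ = a + (s - a) u` gives
`∫_a^s (s-τ)^(-α) f(τ) dτ = (s-a)^(1-α) G(s)` with `G(s) = ∫_0^1 (1-u)^(-α) f(a+(s-a)u) du`
(`rl_integral_eq`). The weight `(1-u)^(-α)` is integrable on `[0,1]` with integral `1/(1-α)`, so `G`
is differentiable on all of `ℝ` by dominated differentiation, with a derivative bounded near `a`
(`scaled_hasDerivAt`). Hence
`(s-a)^α · d/ds [(s-a)^(1-α) G(s)] = (1-α) G(s) + (s-a) G'(s) → (1-α) G(a) = f(a)`.
The blow-up of the absolute value follows by multiplying with `(s-a)^(-α) → ∞`.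
-/

open Real intervalIntegral Filter Topology

/-- The rescaled convolution integral `∫_0^1 (1-u)^(-α) f(a+(s-a)u) du`. -/
noncomputable def scaledIntegral (α a : ℝ) (f : ℝ → ℝ) (s : ℝ) : ℝ :=
  ∫ u in (0 : ℝ)..1, (1 - u) ^ (-α) * f (a + (s - a) * u)

lemma weight_intervalIntegrable {α : ℝ} (hα : α < 1) :
    IntervalIntegrable (fun u : ℝ => (1 - u) ^ (-α)) MeasureTheory.volume 0 1 := by
  have h := (intervalIntegrable_rpow' (a := 0) (b := 1) (r := -α) (by linarith)).comp_sub_left 1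
  simpa using h.symm

lemma weight_integral {α : ℝ} (hα : α < 1) :
    ∫ u in (0 : ℝ)..1, (1 - u) ^ (-α) = 1 / (1 - α) := by
  have h := integral_comp_sub_left (a := 0) (b := 1) (fun x : ℝ => x ^ (-α)) 1
  rw [h, integral_rpow (Or.inl (by linarith))]
  have h0 : -α + 1 ≠ 0 := by linarith
  simp [Real.zero_rpow h0]
  ring

lemma rl_integral_eq {α a s : ℝ} (f : ℝ → ℝ) (hs : a < s) :
    ∫ τ in a..s, (s - τ) ^ (-α) * f τ = (s - a) ^ (1 - α) * scaledIntegral α a f s := by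
  have hpos : 0 < s - a := sub_pos.2 hs
  have h := smul_integral_comp_add_mul (a := 0) (b := 1)
    (fun τ : ℝ => (s - τ) ^ (-α) * f τ) (s - a) a
  have e1 : a + (s - a) * 0 = a := by ring
  have e2 : a + (s - a) * 1 = s := by ring
  rw [e1, e2] at h
  rw [← h, smul_eq_mul, scaledIntegral, sub_eq_add_neg 1 α, Real.rpow_add hpos, Real.rpow_one,
    mul_assoc, ← integral_const_mul ((s - a) ^ (-α))]
  congr 1
  refine integral_congr fun u hu => ?_
  rw [Set.uIcc_of_le zero_le_one] at hu
  have e3 : s - (a + (s - a) * u) = (s - a) * (1 - u) := by ring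
  simp only [e3]
  rw [Real.mul_rpow hpos.le (by linarith [hu.2]), mul_assoc]

/-- Differentiation under the integral sign: on the ball of radius `R` around `a`, the function
`scaledIntegral α a f` is differentiable with bounded derivative. -/
lemma scaled_hasDerivAt {α : ℝ} (hα : α < 1) (a : ℝ) {f : ℝ → ℝ} (hf : ContDiff ℝ 1 f) (R : ℝ) :
    ∃ C : ℝ, ∀ s ∈ Metric.ball a R, ∃ d : ℝ,
      HasDerivAt (scaledIntegral α a f) d s ∧ |d| ≤ C := by
  have hfc : Continuous f := hf.continuous
  have hf' : Continuous (deriv f) := hf.continuous_deriv le_rfl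
  obtain ⟨M, hM⟩ := (isCompact_closedBall a R).exists_bound_of_continuousOn hf'.continuousOn
  have hw := weight_intervalIntegrable hα
  refine ⟨1 / (1 - α) * M, fun s hs => ?_⟩
  have hbound : ∀ u ∈ Set.uIoc (0 : ℝ) 1, ∀ x ∈ Metric.ball a R,
      ‖(1 - u) ^ (-α) * (deriv f (a + (x - a) * u) * u)‖ ≤ (1 - u) ^ (-α) * M := by
    intro u hu x hx
    rw [Set.uIoc_of_le zero_le_one] at hu
    rw [Metric.mem_ball, Real.dist_eq] at hx
    have hwn : 0 ≤ (1 - u) ^ (-α) := Real.rpow_nonneg (by linarith [hu.2]) _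
    rw [norm_mul, norm_mul, Real.norm_of_nonneg hwn, Real.norm_of_nonneg hu.1.le]
    have hmem : a + (x - a) * u ∈ Metric.closedBall a R := by
      rw [Metric.mem_closedBall, Real.dist_eq, add_sub_cancel_left, abs_mul, abs_of_pos hu.1]
      nlinarith [abs_nonneg (x - a), hu.2]
    have h1 := hM _ hmem
    have h2 := norm_nonneg (deriv f (a + (x - a) * u))
    refine mul_le_mul_of_nonneg_left ?_ hwn
    nlinarith [hu.1, hu.2]
  have key := intervalIntegral.hasDerivAt_integral_of_dominated_loc_of_deriv_le
    (μ := MeasureTheory.volume) (a := (0 : ℝ)) (b := 1)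
    (F := fun x u => (1 - u) ^ (-α) * f (a + (x - a) * u))
    (F' := fun x u => (1 - u) ^ (-α) * (deriv f (a + (x - a) * u) * u))
    (x₀ := s) (s := Metric.ball a R) (bound := fun u => (1 - u) ^ (-α) * M)
    (Metric.isOpen_ball.mem_nhds hs)
    (Eventually.of_forall fun x =>
      (hw.mul_continuousOn (g := fun u => f (a + (x - a) * u))
        (by fun_prop)).def'.aestronglyMeasurable)
    (hw.mul_continuousOn (by fun_prop))
    ((hw.mul_continuousOn (g := fun u => deriv f (a + (s - a) * u) * u)
        (by fun_prop)).def'.aestronglyMeasurable)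
    (Eventually.of_forall hbound) (hw.mul_const M)
    (Eventually.of_forall fun u _ x _ => by
      have hi : HasDerivAt (fun x : ℝ => a + (x - a) * u) u x := by
        simpa using (((hasDerivAt_id x).sub_const a).mul_const u).const_add a
      have hd := (hf.differentiable one_ne_zero (a + (x - a) * u)).hasDerivAt
      exact (hd.comp x hi).const_mul _)
  refine ⟨_, key.2, ?_⟩
  have hle := norm_integral_le_of_norm_le (μ := MeasureTheory.volume) zero_le_one
    (f := fun u => (1 - u) ^ (-α) * (deriv f (a + (s - a) * u) * u))
    (Eventually.of_forall fun u hu => hbound u (by rwa [Set.uIoc_of_le zero_le_one]) s hs)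
    (hw.mul_const M)
  rwa [integral_mul_const, weight_integral hα] at hle

/-- **Initial-instant singularity of the Riemann–Liouville fractional derivative.** If
`0 < α < 1` and the Taylor series of `f` at `a` converges to `f` on `[a, b]`, then
`(t-a)^α · (D_RL^α f)(t) → f(a)/Γ(1-α)` as `t → a⁺`; in particular, if `f(a) ≠ 0` then
`|(D_RL^α f)(t)| → +∞` as `t → a⁺`. -/
theorem rlDeriv_initial_singularity
    (α : ℝ) (hα₁ : 0 < α) (hα₂ : α < 1) (a b : ℝ) (hab : a < b)
    (f : ℝ → ℝ) (hf : ContDiff ℝ (⊤ : ℕ∞) f)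
    (hTaylor : ∀ t ∈ Set.Icc a b,
      HasSum (fun k : ℕ => iteratedDeriv k f a / (k.factorial : ℝ) * (t - a) ^ k) (f t)) :
    Tendsto
      (fun t : ℝ => (t - a) ^ α *
        deriv (fun s => (1 / Real.Gamma (1 - α)) *
          ∫ τ in a..s, (s - τ) ^ (-α) * f τ) t)
      (𝓝[>] a) (𝓝 (f a / Real.Gamma (1 - α))) ∧
    (f a ≠ 0 →
      Tendsto
        (fun t : ℝ => |deriv (fun s => (1 / Real.Gamma (1 - α)) *
          ∫ τ in a..s, (s - τ) ^ (-α) * f τ) t|)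
        (𝓝[>] a) atTop) := by
  have hf1 : ContDiff ℝ 1 f := hf.of_le (by exact_mod_cast le_top)
  set G := scaledIntegral α a f with hG
  set c := Real.Gamma (1 - α) with hc
  have hcpos : 0 < c := Real.Gamma_pos_of_pos (by linarith)
  obtain ⟨C, hC⟩ := scaled_hasDerivAt hα₂ a hf1 1
  have hball : ∀ᶠ t in 𝓝[>] a, t ∈ Metric.ball a 1 :=
    mem_nhdsWithin_of_mem_nhds (Metric.ball_mem_nhds a one_pos)
  have hgt : ∀ᶠ t in 𝓝[>] a, a < t := eventually_mem_nhdsWithin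
  have hsub : Tendsto (fun t => t - a) (𝓝[>] a) (𝓝[>] 0) := by
    refine tendsto_nhdsWithin_iff.2 ⟨?_, hgt.mono fun t ht => sub_pos.2 ht⟩
    have : Tendsto (fun t => t - a) (𝓝 a) (𝓝 (a - a)) := (continuous_sub_right a).tendsto a
    rw [sub_self] at this
    exact this.mono_left nhdsWithin_le_nhds
  have hGa : G a = f a / (1 - α) := by
    rw [hG, scaledIntegral]
    simp only [sub_self, zero_mul, add_zero]
    rw [integral_mul_const, weight_integral hα₂]
    ring
  have hGt : Tendsto G (𝓝[>] a) (𝓝 (f a / (1 - α))) := by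
    obtain ⟨d, hd, -⟩ := hC a (Metric.mem_ball_self one_pos)
    rw [← hGa]
    exact hd.continuousAt.tendsto.mono_left nhdsWithin_le_nhds
  have hG't : Tendsto (fun t => (t - a) * deriv G t) (𝓝[>] a) (𝓝 0) := by
    have h1 : Tendsto (fun t => (t - a) * C) (𝓝[>] a) (𝓝 0) := by
      simpa using (hsub.mono_right nhdsWithin_le_nhds).mul_const C
    refine squeeze_zero_norm' ?_ h1
    filter_upwards [hball, hgt] with t ht hat
    obtain ⟨d, hd, hdC⟩ := hC t ht
    rw [hd.deriv, norm_mul, Real.norm_of_nonneg (sub_pos.2 hat).le]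
    exact mul_le_mul_of_nonneg_left hdC (sub_pos.2 hat).le
  have hformula : ∀ᶠ t in 𝓝[>] a,
      1 / c * ((1 - α) * G t + (t - a) * deriv G t) = (t - a) ^ α *
        deriv (fun s => (1 / c) * ∫ τ in a..s, (s - τ) ^ (-α) * f τ) t := by
    filter_upwards [hball, hgt] with t ht hat
    obtain ⟨d, hd, -⟩ := hC t ht
    have hpos : 0 < t - a := sub_pos.2 hat
    have hloc : (fun s => (1 / c) * ∫ τ in a..s, (s - τ) ^ (-α) * f τ) =ᶠ[𝓝 t]
        fun s => (1 / c) * ((s - a) ^ (1 - α) * G s) := by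
      filter_upwards [lt_mem_nhds hat] with s hs
      rw [rl_integral_eq f hs]
    have hp : HasDerivAt (fun s => (s - a) ^ (1 - α))
        (1 * (1 - α) * (t - a) ^ (1 - α - 1)) t :=
      ((hasDerivAt_id t).sub_const a).rpow_const (Or.inl hpos.ne')
    have hprod : HasDerivAt (fun s => (1 / c) * ((s - a) ^ (1 - α) * G s))
        ((1 / c) * (1 * (1 - α) * (t - a) ^ (1 - α - 1) * G t + (t - a) ^ (1 - α) * d)) t :=
      (hp.mul hd).const_mul (1 / c)
    rw [hloc.deriv_eq, hprod.deriv, hd.deriv]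
    have e1 : (t - a) ^ α * (t - a) ^ (1 - α - 1) = 1 := by
      rw [← Real.rpow_add hpos]; simp
    have e2 : (t - a) ^ α * (t - a) ^ (1 - α) = t - a := by
      rw [← Real.rpow_add hpos]; simp
    linear_combination (-(1 / c) * (1 - α) * G t) * e1 - (1 / c * d) * e2
  have hmain : Tendsto
      (fun t : ℝ => (t - a) ^ α *
        deriv (fun s => (1 / c) * ∫ τ in a..s, (s - τ) ^ (-α) * f τ) t)
      (𝓝[>] a) (𝓝 (f a / c)) := by
    have h := (((hGt.const_mul (1 - α)).add hG't).const_mul (1 / c)).congr' hformula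
    have e : 1 / c * ((1 - α) * (f a / (1 - α)) + 0) = f a / c := by
      have : 1 - α ≠ 0 := by linarith
      field_simp
      ring
    rwa [e] at h
  refine ⟨hmain, fun hfa => ?_⟩
  have hinf : Tendsto (fun t => (t - a) ^ (-α)) (𝓝[>] a) atTop :=
    (tendsto_rpow_neg_nhdsGT_zero (by linarith)).comp hsub
  refine (hinf.atTop_mul_pos (abs_pos.2 (div_ne_zero hfa hcpos.ne')) hmain.abs).congr' ?_
  filter_upwards [hgt] with t hat
  have hpos : 0 < t - a := sub_pos.2 hat
  rw [abs_mul, abs_of_pos (Real.rpow_pos_of_pos hpos α), ← mul_assoc, ← Real.rpow_add hpos]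
  simp
end

section
/- Let n be a positive integer, let n−1 < α < n, let a < b, and let f : ℝ → ℝ be infinitely differentiable with its Taylor series at a converging to f on [a,b], i.e. f(t) = Σ_{k=0}^∞ f^{(k)}(a)/k! · (t−a)^k for every t ∈ [a,b]. Then the Caputo fractional derivative of f vanishes at the initial instant: lim_{t → a⁺} (1/Γ(n−α)) ∫_a^t (t−τ)^{n−α−1} f^{(n)}(τ) dτ = 0. -/
/-!
On the compact interval `[a, b]` the continuous function `f⁽ⁿ⁾` is bounded, say by `C`. Since
`n - α - 1 > -1`, the kernel `(t - τ)^(n-α-1)` is integrable on `[a, t]` with integral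
`(t - a)^(n-α) / (n - α)`. Hence the Caputo integral is at most `C (t - a)^(n-α) / (n - α)` in
absolute value, which tends to `0` as `t → a⁺` because `n - α > 0`.
-/

open Real intervalIntegral Filter Topology

/-- The integral of a bounded function against the weakly singular kernel `(t - τ)^(s-1)` is
controlled by the mass `(t - a)^s / s` of the kernel. -/
lemma abs_integral_kernel_mul_le {g : ℝ → ℝ} {a t s C : ℝ} (hs : 0 < s) (hat : a ≤ t)
    (hg : ∀ τ ∈ Set.Icc a t, |g τ| ≤ C) :
    |∫ τ in a..t, (t - τ) ^ (s - 1) * g τ| ≤ (t - a) ^ s / s * C := by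
  have hr : -1 < s - 1 := by linarith
  have hint : IntervalIntegrable (fun τ => (t - τ) ^ (s - 1)) MeasureTheory.volume a t := by
    have h := (intervalIntegrable_rpow' (a := t - a) (b := 0) hr).comp_sub_left t
    simpa using h
  have hmass : ∫ τ in a..t, (t - τ) ^ (s - 1) = (t - a) ^ s / s := by
    rw [integral_comp_sub_left (fun x => x ^ (s - 1)) t, integral_rpow (Or.inl hr)]
    simp [Real.zero_rpow hs.ne']
  rw [← hmass, ← integral_mul_const, ← Real.norm_eq_abs]
  refine norm_integral_le_of_norm_le hat (Eventually.of_forall fun τ hτ => ?_)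
    (hint.mul_const C)
  have hk : 0 ≤ (t - τ) ^ (s - 1) := Real.rpow_nonneg (by linarith [hτ.2]) _
  rw [Real.norm_eq_abs, abs_mul, abs_of_nonneg hk]
  exact mul_le_mul_of_nonneg_left (hg τ ⟨hτ.1.le, hτ.2⟩) hk

/-- **The Caputo fractional derivative vanishes at the initial instant.** If
`n - 1 < α < n` and the Taylor series of `f` at `a` converges to `f` on `[a, b]`, then
`(D_C^α f)(t) = (1/Γ(n-α)) ∫_a^t (t-τ)^(n-α-1) f⁽ⁿ⁾(τ) dτ → 0` as `t → a⁺`. -/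
theorem caputo_vanishes_at_initial_instant
    (n : ℕ) (hn : 0 < n) (α : ℝ) (hα₁ : (n : ℝ) - 1 < α) (hα₂ : α < n)
    (a b : ℝ) (hab : a < b) (f : ℝ → ℝ) (hf : ContDiff ℝ (⊤ : ℕ∞) f)
    (hTaylor : ∀ t ∈ Set.Icc a b,
      HasSum (fun k : ℕ => iteratedDeriv k f a / (k.factorial : ℝ) * (t - a) ^ k) (f t)) :
    Tendsto
      (fun t : ℝ => (1 / Real.Gamma ((n : ℝ) - α)) *
        ∫ τ in a..t, (t - τ) ^ ((n : ℝ) - α - 1) * iteratedDeriv n f τ)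
      (𝓝[>] a) (𝓝 0) := by
  have hs : 0 < (n : ℝ) - α := by linarith
  have hcont : Continuous (iteratedDeriv n f) :=
    hf.continuous_iteratedDeriv n (by exact_mod_cast le_top)
  obtain ⟨C, hC⟩ := (isCompact_Icc (a := a) (b := b)).exists_bound_of_continuousOn
    hcont.continuousOn
  have hlim : Tendsto (fun t : ℝ => (t - a) ^ ((n : ℝ) - α) / ((n : ℝ) - α) * C)
      (𝓝[>] a) (𝓝 0) := by
    have hc : Continuous fun t : ℝ => (t - a) ^ ((n : ℝ) - α) / ((n : ℝ) - α) * C :=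
      (((continuous_id.sub continuous_const).rpow_const
        fun _ => Or.inr hs.le).div_const _).mul_const _
    have h := (hc.tendsto a).mono_left (nhdsWithin_le_nhds (s := Set.Ioi a))
    simpa [Real.zero_rpow hs.ne'] using h
  have hI : Tendsto (fun t : ℝ =>
      ∫ τ in a..t, (t - τ) ^ ((n : ℝ) - α - 1) * iteratedDeriv n f τ) (𝓝[>] a) (𝓝 0) := by
    refine squeeze_zero_norm' ?_ hlim
    filter_upwards [Ioc_mem_nhdsGT hab] with t ht
    exact abs_integral_kernel_mul_le hs ht.1.le fun τ hτ => hC τ ⟨hτ.1, hτ.2.trans ht.2⟩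
  simpa using hI.const_mul (1 / Real.Gamma ((n : ℝ) - α))
end

section
/- Let n be a positive integer, let n−1 < α < n, let λ ∈ ℝ, and let a < t. Then the Riemann–Liouville fractional derivative of the exponential function satisfies (d^n/dt^n)[(1/Γ(n−α)) ∫_a^· (·−τ)^{n−α−1} e^{λτ} dτ](t) = Σ_{k=0}^∞ λ^k e^{λa}/Γ(k−α+1) · (t−a)^{k−α}, the series on the right converging for t > a (this series equals (t−a)^{−α} E_{1,1−α}(λ(t−a)) e^{λa}, where E is the two-parameter Mittag–Leffler function). -/
open Real intervalIntegral

/-!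
Write `E β x = ∑ x ^ k / Γ(k + β)` for the Mittag-Leffler function `E_{1,β}` and
`F β s = (s - a) ^ (β - 1) * E β (lam * (s - a))`. Since `x / Γ(x + 1) = 1 / Γ(x)` for every
real `x` (with the convention `1 / Γ = 0` at the poles), termwise differentiation gives
`d/ds F β = F (β - 1)` on `s > a` (`hasDerivAt_mlKernel`), and shifting the index of summation gives
`F β s = (s - a) ^ (β - 1) / Γ(β) + lam * F (β + 1) s`.

Put `μ = n - α > 0`. By these two facts, `exp (-lam * s) * F (μ + 1) s` is a primitive of
`exp (-lam * s) * (s - a) ^ (μ - 1) / Γ(μ)`, vanishing at `a`. Hence by the fundamental theorem of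
calculus and the reflection `τ ↦ s + a - τ`, the fractional integral of order `μ` of `exp (lam * ·)`
is `exp (lam * a) * F (μ + 1)` (`fracIntegral_exp`), with no Beta integral needed. Differentiating
`n` times lowers the index to `μ + 1 - n = 1 - α`, which is the claimed series.
-/

/-- The Mittag-Leffler function `E_{1,β}`. At the poles of `Γ` the coefficient `1 / Γ` is `0`, both
by the usual convention and by Lean's junk values. -/
noncomputable def mittagLefflerOne (β x : ℝ) : ℝ := ∑' k : ℕ, x ^ k / Real.Gamma (k + β)

/-- The function `s ↦ (s - a) ^ (β - 1) * E_{1,β}(lam * (s - a))`. -/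
noncomputable def mlKernel (lam a β s : ℝ) : ℝ :=
  (s - a) ^ (β - 1) * mittagLefflerOne β (lam * (s - a))

/-- Valid for all real `x`, including the poles of `Γ`. -/
lemma self_div_Gamma_add_one (x : ℝ) : x / Real.Gamma (x + 1) = 1 / Real.Gamma x := by
  rcases eq_or_ne x 0 with rfl | hx
  · simp
  · rw [Real.Gamma_add_one hx]
    rcases eq_or_ne (Real.Gamma x) 0 with h | h
    · simp [h]
    · field_simp

lemma summable_mittagLeffler (β x : ℝ) :
    Summable (fun k : ℕ => x ^ k / Real.Gamma (k + β)) := by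
  refine summable_of_ratio_norm_eventually_le (r := 1 / 2) (by norm_num) ?_
  obtain ⟨N, hN⟩ := exists_nat_gt (2 * |x| + 1 - β)
  filter_upwards [Filter.eventually_ge_atTop N] with k hk
  have hkN : (N : ℝ) ≤ k := by exact_mod_cast hk
  have hx := abs_nonneg x
  have hpos : 0 < (k : ℝ) + β := by linarith
  have hG := Real.Gamma_pos_of_pos hpos
  have e : ((k + 1 : ℕ) : ℝ) + β = (k + β) + 1 := by push_cast; ring
  rw [e, Real.Gamma_add_one hpos.ne', norm_div, norm_div, norm_pow, norm_pow,
    Real.norm_eq_abs, Real.norm_eq_abs, Real.norm_eq_abs, abs_of_pos hG,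
    abs_of_pos (mul_pos hpos hG), pow_succ]
  have : |x| ^ k * |x| / ((k + β) * Real.Gamma (k + β))
      = (|x| / (k + β)) * (|x| ^ k / Real.Gamma (k + β)) := by field_simp
  rw [this]
  refine mul_le_mul_of_nonneg_right ?_ (by positivity)
  rw [div_le_iff₀ hpos]
  linarith

lemma summable_nat_mul_mittagLeffler (β x : ℝ) :
    Summable (fun k : ℕ => (k : ℝ) * (|x| ^ k / |Real.Gamma (k + β)|)) := by
  -- The factor `k` is absorbed by `k ≤ 2 ^ k`.
  refine Summable.of_nonneg_of_le (fun k => by positivity) (fun k => ?_)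
    (summable_mittagLeffler β (2 * x)).abs
  have h2 : (k : ℝ) ≤ 2 ^ k := by exact_mod_cast Nat.lt_two_pow_self.le
  rw [abs_div, abs_pow, abs_mul, mul_pow, mul_div_assoc, abs_two]
  gcongr

lemma hasDerivAt_mittagLeffler (β x : ℝ) :
    HasDerivAt (mittagLefflerOne β)
      (∑' k : ℕ, (k : ℝ) * x ^ (k - 1) / Real.Gamma (k + β)) x := by
  have hR : (1 : ℝ) ≤ |x| + 1 := by linarith [abs_nonneg x]
  refine hasDerivAt_tsum_of_isPreconnected (t := Metric.ball (0 : ℝ) (|x| + 1))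
    (g := fun (k : ℕ) y => y ^ k / Real.Gamma (k + β))
    (g' := fun (k : ℕ) y => (k : ℝ) * y ^ (k - 1) / Real.Gamma (k + β)) (y₀ := 0)
    (summable_nat_mul_mittagLeffler β (|x| + 1)) Metric.isOpen_ball
    (convex_ball _ _).isPreconnected ?_ ?_ ?_ ?_ ?_
  · intro k y _
    exact (hasDerivAt_pow k y).div_const _
  · intro k y hy
    have hy' : |y| ≤ |x| + 1 := by
      have := (mem_ball_zero_iff.1 hy).le
      simpa using this
    rw [abs_of_pos (by linarith : 0 < |x| + 1), norm_div, norm_mul, norm_pow, Real.norm_eq_abs,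
      Real.norm_eq_abs, Real.norm_eq_abs, Nat.abs_cast, mul_div_assoc]
    gcongr
    calc |y| ^ (k - 1) ≤ (|x| + 1) ^ (k - 1) := by gcongr
      _ ≤ (|x| + 1) ^ k := pow_le_pow_right₀ hR (Nat.sub_le _ _)
  · simpa using by positivity
  · exact summable_mittagLeffler β 0
  · simp

/-- The index-lowering relation `(β - 1) * E + x * dE/dx = E_{1,β-1}` for `E = E_{1,β}`. -/
lemma mittagLeffler_lower (β x : ℝ) :
    (β - 1) * mittagLefflerOne β x
      + x * (∑' k : ℕ, (k : ℝ) * x ^ (k - 1) / Real.Gamma (k + β))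
      = mittagLefflerOne (β - 1) x := by
  have e (k : ℕ) : x * ((k : ℝ) * x ^ (k - 1) / Real.Gamma (k + β))
      = k * (x ^ k / Real.Gamma (k + β)) := by
    rcases k with _ | k
    · simp
    · simp only [Nat.add_sub_cancel, pow_succ]; ring
  have hs : Summable (fun k : ℕ => (k : ℝ) * (x ^ k / Real.Gamma (k + β))) := by
    refine Summable.of_norm ?_
    simpa [abs_mul, abs_div, abs_pow] using summable_nat_mul_mittagLeffler β x
  rw [← tsum_mul_left, tsum_congr e, mittagLefflerOne, ← tsum_mul_left,
    ← Summable.tsum_add ((summable_mittagLeffler β x).mul_left _) hs, mittagLefflerOne]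
  refine tsum_congr fun k => ?_
  have := self_div_Gamma_add_one (k + (β - 1))
  rw [show (k : ℝ) + (β - 1) + 1 = k + β by ring] at this
  rw [div_eq_mul_one_div (x ^ k) (Real.Gamma (k + (β - 1))), ← this]
  ring

lemma mittagLeffler_shift (β x : ℝ) :
    mittagLefflerOne β x = 1 / Real.Gamma β + x * mittagLefflerOne (β + 1) x := by
  rw [mittagLefflerOne, (summable_mittagLeffler β x).tsum_eq_zero_add, mittagLefflerOne,
    ← tsum_mul_left]
  congr 1
  · simp
  · refine tsum_congr fun k => ?_
    rw [show ((k + 1 : ℕ) : ℝ) + β = k + (β + 1) by push_cast; ring]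
    ring

lemma hasDerivAt_mlKernel (lam a β s : ℝ) (hs : a < s) :
    HasDerivAt (mlKernel lam a β) (mlKernel lam a (β - 1) s) s := by
  have hpos : 0 < s - a := sub_pos.2 hs
  have h1 : HasDerivAt (fun s : ℝ => s - a) 1 s := (hasDerivAt_id s).sub_const a
  have h2 : HasDerivAt (fun s : ℝ => (s - a) ^ (β - 1)) _ s :=
    h1.rpow_const (p := β - 1) (Or.inl hpos.ne')
  have h3 := (hasDerivAt_mittagLeffler β (lam * (s - a))).comp s (h1.const_mul lam)
  refine (h2.mul h3).congr_deriv ?_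
  simp only [Function.comp_apply]
  rw [mlKernel, ← mittagLeffler_lower, show (s - a) ^ (β - 1) = (s - a) ^ (β - 1 - 1) * (s - a) by
    rw [← Real.rpow_add_one hpos.ne']; congr 1; ring]
  ring

lemma mlKernel_shift (lam a β s : ℝ) (hs : a < s) :
    mlKernel lam a β s = (s - a) ^ (β - 1) / Real.Gamma β + lam * mlKernel lam a (β + 1) s := by
  have hpos : 0 < s - a := sub_pos.2 hs
  rw [mlKernel, mlKernel, mittagLeffler_shift, show (s - a) ^ (β + 1 - 1)
    = (s - a) ^ (β - 1) * (s - a) by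
    rw [← Real.rpow_add_one hpos.ne']; congr 1; ring]
  ring

lemma iteratedDeriv_mlKernel (lam a β : ℝ) (m : ℕ) :
    ∀ s, a < s → iteratedDeriv m (mlKernel lam a β) s = mlKernel lam a (β - m) s := by
  induction m with
  | zero => intro s _; simp
  | succ m ih =>
    intro s hs
    rw [iteratedDeriv_succ]
    have : iteratedDeriv m (mlKernel lam a β) =ᶠ[nhds s] mlKernel lam a (β - m) := by
      filter_upwards [Ioi_mem_nhds hs] with y hy using ih y hy
    rw [this.deriv_eq, (hasDerivAt_mlKernel lam a (β - m) s hs).deriv]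
    congr 1
    push_cast
    ring

/-- The Riemann–Liouville fractional integral of order `μ` of `exp (lam * ·)`. -/
lemma fracIntegral_exp (lam a μ s : ℝ) (hμ : 0 < μ) (hs : a < s) :
    (1 / Real.Gamma μ) * ∫ τ in a..s, (s - τ) ^ (μ - 1) * Real.exp (lam * τ)
      = Real.exp (lam * a) * mlKernel lam a (μ + 1) s := by
  have hexp (v : ℝ) : HasDerivAt (fun v => Real.exp (-(lam * v)))
      (Real.exp (-(lam * v)) * -(lam * 1)) v :=
    (((hasDerivAt_id v).const_mul lam).neg).exp
  have hcont : Continuous (mlKernel lam a (μ + 1)) := by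
    have hE : Continuous (mittagLefflerOne (μ + 1)) :=
      continuous_iff_continuousAt.2 fun x => (hasDerivAt_mittagLeffler (μ + 1) x).continuousAt
    refine Continuous.mul ?_ (hE.comp (by fun_prop))
    exact (continuous_id.sub continuous_const).rpow_const fun _ => Or.inr (by linarith)
  have hderiv : ∀ v ∈ Set.Ioo a s,
      HasDerivAt (fun v => Real.exp (-(lam * v)) * mlKernel lam a (μ + 1) v)
        (Real.exp (-(lam * v)) * ((v - a) ^ (μ - 1) / Real.Gamma μ)) v := by
    intro v hv
    refine ((hexp v).mul (hasDerivAt_mlKernel lam a (μ + 1) v hv.1)).congr_deriv ?_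
    rw [add_sub_cancel_right, mlKernel_shift lam a μ v hv.1]
    ring
  have hint : IntervalIntegrable (fun v => Real.exp (-(lam * v)) *
      ((v - a) ^ (μ - 1) / Real.Gamma μ)) MeasureTheory.volume a s := by
    have h0 : IntervalIntegrable (fun v : ℝ => v ^ (μ - 1)) MeasureTheory.volume (a - a) (s - a) :=
      intervalIntegrable_rpow' (by linarith)
    have h1 : IntervalIntegrable (fun v : ℝ => (v - a) ^ (μ - 1)) MeasureTheory.volume a s := by
      simpa using h0.comp_sub_right a
    exact (h1.div_const _).continuousOn_mul (by fun_prop)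
  have key := integral_eq_sub_of_hasDerivAt_of_le hs.le
    (((by fun_prop : Continuous fun v => Real.exp (-(lam * v))).mul hcont).continuousOn)
    hderiv hint
  have ha : mlKernel lam a (μ + 1) a = 0 := by
    simp [mlKernel, Real.zero_rpow hμ.ne']
  simp only [Pi.mul_apply, ha, mul_zero, sub_zero] at key
  have hrefl : ∫ τ in a..s, (s - τ) ^ (μ - 1) * Real.exp (lam * τ)
      = ∫ v in a..s, (v - a) ^ (μ - 1) * Real.exp (lam * (s + a - v)) := by
    have := integral_comp_sub_left (a := a) (b := s)
      (fun v => (v - a) ^ (μ - 1) * Real.exp (lam * (s + a - v))) (s + a)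
    rw [show s + a - s = a by ring, show s + a - a = s by ring] at this
    rw [← this]
    refine integral_congr fun τ _ => ?_
    congr 2 <;> ring_nf
  have hfac : (1 / Real.Gamma μ) * ∫ τ in a..s, (s - τ) ^ (μ - 1) * Real.exp (lam * τ)
      = Real.exp (lam * (s + a)) * ∫ v in a..s, Real.exp (-(lam * v)) *
        ((v - a) ^ (μ - 1) / Real.Gamma μ) := by
    rw [hrefl, ← integral_const_mul, ← integral_const_mul]
    refine integral_congr fun v _ => ?_
    rw [show lam * (s + a - v) = lam * (s + a) + -(lam * v) by ring, Real.exp_add]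
    ring
  rw [hfac, key, ← mul_assoc, ← Real.exp_add]
  congr 2
  ring

/-- **Riemann–Liouville fractional derivative of the exponential function.** For
`n - 1 < α < n`, `λ ∈ ℝ` and `a < t`:
`(D_RL^α e^{λ·})(t) = Σ_{k=0}^∞ λ^k e^{λa}/Γ(k-α+1) (t-a)^(k-α)`, the series
converging for `t > a` (its value is `(t-a)^(-α) E_{1,1-α}(λ(t-a)) e^{λa}` where `E`
is the two-parameter Mittag–Leffler function). -/
theorem rlDeriv_exp_series
    (n : ℕ) (hn : 0 < n) (α : ℝ) (hα₁ : (n : ℝ) - 1 < α) (hα₂ : α < n)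
    (lam : ℝ) (a t : ℝ) (hat : a < t) :
    HasSum
      (fun k : ℕ =>
        lam ^ k * Real.exp (lam * a) / Real.Gamma ((k : ℝ) - α + 1) *
          (t - a) ^ ((k : ℝ) - α))
      (iteratedDeriv n
        (fun s => (1 / Real.Gamma ((n : ℝ) - α)) *
          ∫ τ in a..s, (s - τ) ^ ((n : ℝ) - α - 1) * Real.exp (lam * τ)) t) := by
  have hev : (fun s => (1 / Real.Gamma ((n : ℝ) - α)) *
      ∫ τ in a..s, (s - τ) ^ ((n : ℝ) - α - 1) * Real.exp (lam * τ)) =ᶠ[nhds t]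
      fun s => Real.exp (lam * a) * mlKernel lam a (n - α + 1) s := by
    filter_upwards [Ioi_mem_nhds hat] with s hs
    exact fracIntegral_exp lam a (n - α) s (by linarith) hs
  have hpos : 0 < t - a := sub_pos.2 hat
  rw [hev.iteratedDeriv_eq, iteratedDeriv_const_mul_field,
    iteratedDeriv_mlKernel lam a _ n t hat, show (n : ℝ) - α + 1 - n = 1 - α by ring, mlKernel,
    ← mul_assoc]
  refine ((summable_mittagLeffler (1 - α) (lam * (t - a))).hasSum.mul_left _).congr_fun ?_
  intro k
  rw [show (k : ℝ) + (1 - α) = k - α + 1 by ring, show 1 - α - 1 = -α by ring,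
    sub_eq_add_neg (k : ℝ) α, Real.rpow_add hpos, Real.rpow_natCast, mul_pow]
  ring
end
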